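/- Let φ : A → B and ψ : B → A be homomorphisms of commutative noetherian rings with ψ ∘ φ = id_A (a ring retraction). Assume that (i) B is flat as an A-module via φ, (ii) the surjection ψ is a local complete intersection, (iii) A is a perfect B-module via ψ, and (iv) A is nonzero and Spec(A) is connected. Then there exist an integer n ≥ 0 and an invertible A-module N̄ such that for every B-module X and every integer i there is an isomorphism of A-modules, natural in X: Ext^i_B(A, X) ≅ N̄ ⊗_A Tor^B_{n−i}(A, X), where Tor in negative homological degrees is interpreted as zero. -/

import Mathlib

universe u

open CategoryTheory CategoryTheory.MonoidalCategory

/-- An `R`-module `L` is *invertible* if there is an `R`-module `L'` with `L ⊗[R] L' ≅ R`. -/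
def Module.IsInvertible (R : Type u) [CommRing R] (L : Type u) [AddCommGroup L] [Module R L] :
    Prop :=
  ∃ (L' : Type u) (_ : AddCommGroup L') (_ : Module R L'),
    Nonempty ((TensorProduct R L L') ≃ₗ[R] R)

/-- A module `M` over `R` is *perfect of length at most `n`*: this encodes the existence of
a resolution `0 → P_n → ⋯ → P_0 → M → 0` by finitely generated projective `R`-modules,
via iterated kernels of surjections from finitely generated projective modules. -/
def Module.IsPerfectLE (R : Type u) [CommRing R] :
    ∀ (_n : ℕ) (M : Type u) [AddCommGroup M] [Module R M], Prop
  | 0, M, _, _ => Module.Finite R M ∧ Module.Projective R M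
  | n + 1, M, _, _ => ∃ (P : Type u) (_ : AddCommGroup P) (_ : Module R P)
      (f : P →ₗ[R] M), Module.Finite R P ∧ Module.Projective R P ∧
        Function.Surjective f ∧ Module.IsPerfectLE R n (LinearMap.ker f)

/-- A module is *perfect* if it admits a finite length resolution
`0 → P_n → ⋯ → P_0 → M → 0` by finitely generated projective modules. -/
def Module.IsPerfect (R : Type u) [CommRing R] (M : Type u) [AddCommGroup M] [Module R M] :
    Prop :=
  ∃ n : ℕ, Module.IsPerfectLE R n M

/-- A surjective ring homomorphism `ψ : B →+* A` is a *local complete intersection* if for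
every prime `q` of `A`, with `p = ψ⁻¹(q)`, the kernel of the induced local homomorphism
`B_p →+* A_q` is generated by a `B_p`-regular sequence. -/
def RingHom.IsLocalCompleteIntersection {B A : Type u} [CommRing B] [CommRing A]
    (ψ : B →+* A) : Prop :=
  ∀ (q : Ideal A) (hq : q.IsPrime),
    haveI := hq
    haveI : (q.comap ψ).IsPrime := hq.comap ψ
    ∃ rs : List (Localization.AtPrime (q.comap ψ)),
      RingTheory.Sequence.IsRegular (Localization.AtPrime (q.comap ψ)) rs ∧
      RingHom.ker (Localization.localRingHom (q.comap ψ) q ψ rfl) = Ideal.ofList rs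

/-- `Ext^i_B(A, -)` (with `A` a `B`-module via `ψ`), viewed as a functor from `B`-modules to
`A`-modules (the canonical `A`-module structure is restriction of scalars along `φ`, since
`ψ ∘ φ = id`), with the convention that it is the zero functor in negative degrees. -/
noncomputable def extRetractFunctor {A B : Type u} [CommRing A] [CommRing B]
    (φ : A →+* B) (ψ : B →+* A) (i : ℤ) : ModuleCat.{u} B ⥤ ModuleCat.{u} A :=
  letI := ψ.toModule
  if 0 ≤ i then
    ((Ext B (ModuleCat.{u} B) i.toNat).obj (Opposite.op (ModuleCat.of B A))) ⋙
      ModuleCat.restrictScalars φ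
  else (Functor.const _).obj (ModuleCat.of A PUnit)

/-- `Tor^B_j(A, -)` (with `A` a `B`-module via `ψ`), viewed as a functor from `B`-modules to
`A`-modules (the canonical `A`-module structure is restriction of scalars along `φ`, since
`ψ ∘ φ = id`), with the convention that it is the zero functor in negative degrees. -/
noncomputable def torRetractFunctor {A B : Type u} [CommRing A] [CommRing B]
    (φ : A →+* B) (ψ : B →+* A) (j : ℤ) : ModuleCat.{u} B ⥤ ModuleCat.{u} A :=
  letI := ψ.toModule
  if 0 ≤ j then
    ((Tor (ModuleCat.{u} B) j.toNat).obj (ModuleCat.of B A)) ⋙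
      ModuleCat.restrictScalars φ
  else (Functor.const _).obj (ModuleCat.of A PUnit)

/-!
At a prime `q` of `A` the kernel of `B → A` is generated by a regular sequence of some length `n`,
and Rees' theorem computes `Ext_B^j(A, B)_q` to be `A_q` for `j = n` and `0` otherwise. All these
modules are therefore flat over `A`, so their ranks are locally constant; as `Spec A` is connected,
`n` does not depend on `q`. Hence `N = Ext_B^n(A, B)` is invertible, `Ext_B^j(A, B) = 0` for
`j ≠ n`, and `A` has projective dimension at most `n` over `B`.

Consequently `Ext_B^n(A, -)` is right exact and thus isomorphic to `N ⊗_A (A ⊗_B -)`. As `N` is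
flat, `N ⊗_A Tor^B_k(A, -)` is the `k`-th left satellite of this functor. The same holds for
`Ext_B^{n-k}(A, -)`, because `Ext_B^j(A, -)` vanishes on free modules for `j < n`: the long exact
sequence of a syzygy `Ω X ⟶ F X ⟶ X` identifies `Ext^j(A, X)` with the kernel of
`Ext^{j+1}(A, Ω X) ⟶ Ext^{j+1}(A, F X)`.
-/

namespace VanDenBergh

open Limits

section Satellite

universe v w u₁ u₂ u₃

lemma exact_of_forall_exact_app {C : Type u₁} [Category.{v} C] {D : Type u₂} [Category.{w} D]
    [Abelian D] (S : ShortComplex (C ⥤ D))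
    (hS : ∀ X, (S.map ((evaluation C D).obj X)).Exact) : S.Exact := by
  rw [S.exact_iff_isZero_homology, Functor.isZero_iff]
  exact fun X => ((S.map _).exact_iff_isZero_homology.1 (hS X)).of_iso
    (S.mapHomologyIso ((evaluation C D).obj X)).symm

lemma isZero_comp {C D E : Type*} [Category C] [Category D] [Category E] [HasZeroMorphisms D]
    [HasZeroMorphisms E] {F : C ⥤ D} (hF : IsZero F) (G : D ⥤ E) [G.PreservesZeroMorphisms] :
    IsZero (F ⋙ G) :=
  Functor.isZero _ fun X => G.map_isZero (((evaluation C D).obj X).map_isZero hF)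

variable {C : Type u₁} [Category.{v} C] [Abelian C] {D : Type u₂} [Category.{w} D] [Abelian D]
  {E : Type u₃} [Category.{w} E] [Abelian E]

/-- The left satellite, in the sense of Cartan and Eilenberg, of a functor `T`, computed with the
syzygies `Ω X = ker (F X ⟶ X)` of a functorial epimorphism `π` (with projective source in all
applications): it sends `X` to the kernel of `T (Ω X) ⟶ T (F X)`. -/
noncomputable def leftSatellite {F : C ⥤ C} (π : F ⟶ 𝟭 C) (T : C ⥤ D) : C ⥤ D :=
  kernel (Functor.whiskerRight (kernel.ι π) T)

variable {F : C ⥤ C} (π : F ⟶ 𝟭 C)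

noncomputable def leftSatelliteIso {T₁ T₂ : C ⥤ D} (e : T₁ ≅ T₂) :
    leftSatellite π T₁ ≅ leftSatellite π T₂ :=
  kernel.mapIso _ _ (Functor.isoWhiskerLeft (kernel π) e) (Functor.isoWhiskerLeft F e)
    (by ext X; simp)

noncomputable def leftSatelliteCompIso (T : C ⥤ D) (H : D ⥤ E) [PreservesFiniteLimits H] :
    leftSatellite π T ⋙ H ≅ leftSatellite π (T ⋙ H) :=
  PreservesKernel.iso ((Functor.whiskeringRight C D E).obj H) _

variable {π}

lemma isZero_leftSatellite_of_mono {T : C ⥤ D} (hT : ∀ X, Mono (T.map ((kernel.ι π).app X))) :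
    IsZero (leftSatellite π T) := by
  have : ∀ X, Mono ((Functor.whiskerRight (kernel.ι π) T).app X) := hT
  have : Mono (Functor.whiskerRight (kernel.ι π) T) := NatTrans.mono_of_mono_app _
  exact isZero_kernel_of_mono _

lemma isZero_leftSatellite {T : C ⥤ D} (hT : IsZero T) : IsZero (leftSatellite π T) :=
  isZero_leftSatellite_of_mono fun _ => ⟨fun _ _ _ => (hT.obj _).eq_of_tgt _ _⟩

/-- If `0 ⟶ T₁ X ⟶ T (Ω X) ⟶ T (F X)` is exact for all `X`, then `T₁` is the left satellite
of `T`. -/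
noncomputable def isoLeftSatelliteOfExact {T₁ T : C ⥤ D} (f : T₁ ⟶ kernel π ⋙ T)
    [∀ X, Mono (f.app X)] (w : ∀ X, f.app X ≫ T.map ((kernel.ι π).app X) = 0)
    (hf : ∀ X, (ShortComplex.mk _ _ (w X)).Exact) : T₁ ≅ leftSatellite π T :=
  have : Mono f := NatTrans.mono_of_mono_app f
  have w' : f ≫ Functor.whiskerRight (kernel.ι π) T = 0 := by ext X; exact w X
  have hf' : (ShortComplex.mk _ _ w').Exact := exact_of_forall_exact_app _ hf
  IsLimit.conePointUniqueUpToIso hf'.fIsKernel (limit.isLimit _)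

noncomputable def leftSatelliteIsoOfIsZero {T : C ⥤ D} (hT : ∀ X, IsZero (T.obj (F.obj X))) :
    leftSatellite π T ≅ kernel π ⋙ T :=
  kernel.mapIso _ (0 : _ ⟶ F ⋙ T) (Iso.refl _) (Iso.refl _) (by
    ext X; exact (hT X).eq_of_tgt _ _) ≪≫ kernelZeroIsoSource

end Satellite

section FunctorialResolution

universe v w u₁ u₂

lemma exact_epi_comp {C : Type u₁} [Category.{v} C] [Abelian C] {X X₁ X₂ X₃ : C}
    {f : X₁ ⟶ X₂} {g : X₂ ⟶ X₃} {w : f ≫ g = 0} (h : (ShortComplex.mk f g w).Exact)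
    (e : X ⟶ X₁) [Epi e] : (ShortComplex.mk (e ≫ f) g (by simp [w])).Exact :=
  let toS : ShortComplex.mk (e ≫ f) g (by simp [w]) ⟶ ShortComplex.mk f g w :=
    { τ₁ := e, τ₂ := 𝟙 _, τ₃ := 𝟙 _ }
  (ShortComplex.exact_iff_of_epi_of_isIso_of_mono toS).2 h

lemma exact_comp_mono {C : Type u₁} [Category.{v} C] [Abelian C] {X₁ X₂ X₃ Y : C}
    {f : X₁ ⟶ X₂} {g : X₂ ⟶ X₃} {w : f ≫ g = 0} (h : (ShortComplex.mk f g w).Exact)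
    (m : X₃ ⟶ Y) [Mono m] : (ShortComplex.mk f (g ≫ m) (by simp [reassoc_of% w])).Exact :=
  let ofS : ShortComplex.mk f g w ⟶ ShortComplex.mk f (g ≫ m) (by simp [reassoc_of% w]) :=
    { τ₁ := 𝟙 _, τ₂ := 𝟙 _, τ₃ := m }
  (ShortComplex.exact_iff_of_epi_of_isIso_of_mono ofS).1 h

/-- If the second map `S.X₂ ⟶ S.X₃` factors as `p ≫ m` with `p` the cokernel of the first one, then
the homology of `S` is the kernel of `m`. -/
noncomputable def homologyIsoKernel {C : Type u₁} [Category.{v} C] [Abelian C] (S : ShortComplex C)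
    {Q : C} {p : S.X₂ ⟶ Q} {w : S.f ≫ p = 0} (h : (ShortComplex.mk S.f p w).Exact) (hp : Epi p)
    (m : Q ⟶ S.X₃) (hm : p ≫ m = S.g) : S.homology ≅ kernel m :=
  have desc : h.gIsCokernel.desc (CokernelCofork.ofπ _ S.zero) = m := by
    rw [← cancel_epi p]
    exact (h.gIsCokernel.fac _ WalkingParallelPair.one).trans hm.symm
  ShortComplex.RightHomologyData.homologyIso
    { Q := Q
      H := kernel _
      p := p
      ι := kernel.ι _
      wp := w
      hp := h.gIsCokernel
      wι := kernel.condition _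
      hι := kernelIsKernel _ } ≪≫ kernelIsoOfEq desc

lemma quasiIso_toSingle₀ {C : Type u₁} [Category.{v} C] [Abelian C] {K : ChainComplex C ℕ} {X : C}
    (f : K.X 0 ⟶ X) (hf : Epi f) (w : K.d 1 0 ≫ f = 0) (h₀ : (ShortComplex.mk _ _ w).Exact)
    (h : ∀ n, (K.sc' (n + 2) (n + 1) n).Exact) :
    QuasiIso ((K.toSingle₀Equiv X).symm ⟨f, w⟩) where
  quasiIsoAt n := by
    cases n with
    | zero =>
      rw [ChainComplex.quasiIsoAt₀_iff, ShortComplex.quasiIso_iff_of_zeros'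
        _ (K.shape 0 0 (by simp)) rfl rfl]
      refine (ShortComplex.exact_and_epi_g_iff_of_iso ?_).2 ⟨h₀, hf⟩
      exact ShortComplex.isoMk (Iso.refl _) (Iso.refl _) (Iso.refl _)
        ((Category.id_comp _).trans (Category.comp_id _).symm)
        ((Category.id_comp f).trans
          ((ChainComplex.toSingle₀Equiv_symm_apply_f_zero f w).symm.trans
            (Category.comp_id _).symm))
    | succ n =>
      rw [quasiIsoAt_iff_exactAt' _ _ (ChainComplex.exactAt_succ_single_obj X n),
        K.exactAt_iff' (n + 2) (n + 1) n (by simp) (by simp)]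
      exact h n

variable {C : Type u₁} [Category.{v} C] [Abelian C] {F : C ⥤ C} (π : F ⟶ 𝟭 C)

/-- The cover `F (Ω X) ⟶ Ω X` of the syzygy `Ω X` of `X`. -/
noncomputable def kernelCover : kernel π ⋙ F ⟶ kernel π :=
  Functor.whiskerLeft (kernel π) π ≫ (kernel π).rightUnitor.hom

lemma kernelCover_comp_ι_comp : (kernelCover π ≫ kernel.ι π) ≫ π = 0 := by
  simp

lemma whiskerLeft_kernelCover_comp_ι_comp_kernelCover :
    Functor.whiskerLeft (kernel π) (kernelCover π ≫ kernel.ι π) ≫ kernelCover π = 0 := by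
  have h := congr_arg ((Functor.whiskeringLeft C C C).obj (kernel π)).map
    (kernelCover_comp_ι_comp π)
  rw [Functor.map_comp, Functor.map_zero] at h
  exact (Category.assoc _ _ _).symm.trans ((h =≫ (kernel π).rightUnitor.hom).trans zero_comp)

lemma whiskerLeft_kernelCover_comp_ι_comp :
    Functor.whiskerLeft (kernel π) (kernelCover π ≫ kernel.ι π) ≫ kernelCover π ≫ kernel.ι π =
      0 := by
  rw [reassoc_of% whiskerLeft_kernelCover_comp_ι_comp_kernelCover, zero_comp]

/-- The term `X ↦ F (Ω ⋯ (Ω X))` of degree `n` of the resolution by iterated syzygies. It is built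
by precomposition, so that the differential in degree `n + 1` is the one in degree `n` at `Ω X`. -/
noncomputable def resolutionX : ℕ → (C ⥤ C)
  | 0 => F
  | n + 1 => kernel π ⋙ resolutionX n

/-- The differential `F (Ω X) ⟶ Ω X ⟶ F X`, applied to iterated syzygies. -/
noncomputable def resolutionD : ∀ n, resolutionX π (n + 1) ⟶ resolutionX π n
  | 0 => kernelCover π ≫ kernel.ι π
  | n + 1 => Functor.whiskerLeft (kernel π) (resolutionD n)

lemma resolutionD_comp : ∀ n, resolutionD π (n + 1) ≫ resolutionD π n = 0
  | 0 => whiskerLeft_kernelCover_comp_ι_comp π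
  | n + 1 => by
    ext X
    exact congr_app (resolutionD_comp n) ((kernel π).obj X)

/-- The resolution of `X` by iterated syzygies, as a functor of `X`. -/
noncomputable def resolution : ChainComplex (C ⥤ C) ℕ :=
  ChainComplex.of (resolutionX π) (resolutionD π) (resolutionD_comp π)

noncomputable def resolutionSc'Iso (n : ℕ) :
    (resolution π).sc' (n + 2) (n + 1) n ≅ ShortComplex.mk _ _ (resolutionD_comp π n) :=
  ShortComplex.isoMk (Iso.refl _) (Iso.refl _) (Iso.refl _)
    ((Category.id_comp _).trans <| (ChainComplex.of_d (resolutionX π) (resolutionD π) _).symm.trans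
      (Category.comp_id _).symm)
    ((Category.id_comp _).trans <| (ChainComplex.of_d (resolutionX π) (resolutionD π) _).symm.trans
      (Category.comp_id _).symm)

lemma resolution_d_one_zero : (resolution π).d 1 0 = kernelCover π ≫ kernel.ι π :=
  ChainComplex.of_d (resolutionX π) (resolutionD π) 0

/-- The map `π`, with its source spelled as the degree `0` term of `resolution π`. -/
noncomputable def resolutionAugmentation : (resolution π).X 0 ⟶ 𝟭 C := π

lemma resolution_d_comp_augmentation :
    (resolution π).d 1 0 ≫ resolutionAugmentation π = 0 := by
  rw [resolution_d_one_zero]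
  exact kernelCover_comp_ι_comp π

variable [∀ X, Epi (π.app X)]

instance epi_kernelCover : Epi (kernelCover π) :=
  have (X : C) : Epi ((kernelCover π).app X) :=
    inferInstanceAs (Epi (π.app ((kernel π).obj X) ≫ 𝟙 _))
  NatTrans.epi_of_epi_app _

lemma exact_kernelCover_comp_ι :
    (ShortComplex.mk _ _ (kernelCover_comp_ι_comp π)).Exact :=
  exact_epi_comp (ShortComplex.exact_kernel π) (kernelCover π)

lemma exact_whiskerLeft_kernelCover_comp_ι_kernelCover :
    (ShortComplex.mk _ _ (whiskerLeft_kernelCover_comp_ι_comp_kernelCover π)).Exact :=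
  exact_comp_mono
    ((exact_kernelCover_comp_ι π).map ((Functor.whiskeringLeft C C C).obj (kernel π)))
    (kernel π).rightUnitor.hom

lemma exact_whiskerLeft_kernelCover_comp_ι :
    (ShortComplex.mk _ _ (whiskerLeft_kernelCover_comp_ι_comp π)).Exact :=
  exact_comp_mono (exact_whiskerLeft_kernelCover_comp_ι_kernelCover π) (kernel.ι π)

lemma exact_resolutionD : ∀ n, (ShortComplex.mk _ _ (resolutionD_comp π n)).Exact
  | 0 => exact_whiskerLeft_kernelCover_comp_ι π
  | n + 1 => (exact_resolutionD n).map ((Functor.whiskeringLeft C C C).obj (kernel π))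

instance projective_resolutionX_obj [∀ X, Projective (F.obj X)] :
    ∀ n X, Projective ((resolutionX π n).obj X)
  | 0, X => inferInstanceAs (Projective (F.obj X))
  | n + 1, X => projective_resolutionX_obj n ((kernel π).obj X)

lemma exact_resolutionAugmentation :
    (ShortComplex.mk _ _ (resolution_d_comp_augmentation π)).Exact :=
  (ShortComplex.exact_iff_of_iso
    (ShortComplex.isoMk (S₁ := ShortComplex.mk _ _ (kernelCover_comp_ι_comp π))
      (S₂ := ShortComplex.mk _ _ (resolution_d_comp_augmentation π))
      (Iso.refl _) (Iso.refl _) (Iso.refl _)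
      ((Category.id_comp _).trans <| (resolution_d_one_zero π).trans (Category.comp_id _).symm)
      ((Category.id_comp _).trans (Category.comp_id _).symm))).1 (exact_kernelCover_comp_ι π)

variable [∀ X, Projective (F.obj X)]

/-- The projective resolution of `X` by iterated syzygies. -/
noncomputable def resolutionObj (X : C) : ProjectiveResolution X where
  complex := (((evaluation C C).obj X).mapHomologicalComplex _).obj (resolution π)
  projective n := projective_resolutionX_obj π n X
  π := (ChainComplex.toSingle₀Equiv _ X).symm
    ⟨(resolutionAugmentation π).app X, congr_app (resolution_d_comp_augmentation π) X⟩
  quasiIso := quasiIso_toSingle₀ _ (inferInstanceAs (Epi (π.app X))) _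
    ((exact_resolutionAugmentation π).map ((evaluation C C).obj X)) fun n =>
      ((ShortComplex.exact_iff_of_iso (resolutionSc'Iso π n)).2 (exact_resolutionD π n)).map
        ((evaluation C C).obj X)

variable {D : Type u₂} [Category.{w} D] [Abelian D]
  (G : C ⥤ D) [G.Additive]

/-- The resolution by iterated syzygies after application of `G`; its homology is the family of left
derived functors of `G`. -/
noncomputable def mappedResolution : ChainComplex (C ⥤ D) ℕ :=
  (((Functor.whiskeringRight C C D).obj G).mapHomologicalComplex _).obj (resolution π)

noncomputable def homologyResolutionObjIso (k : ℕ) (X : C) :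
    (HomologicalComplex.homologyFunctor D _ k).obj
        ((G.mapHomologicalComplex _).obj (resolutionObj π X).complex) ≅
      ((mappedResolution π G).homology k).obj X :=
  ((mappedResolution π G).sc k).mapHomologyIso ((evaluation C D).obj X)

/-- The functoriality in `X` of the resolution by iterated syzygies. -/
noncomputable def resolutionObjMap {X Y : C} (f : X ⟶ Y) :
    (resolutionObj π X).complex ⟶ (resolutionObj π Y).complex :=
  (NatTrans.mapHomologicalComplex ((evaluation C C).map f) _).app (resolution π)

lemma resolutionObjMap_comp_π {X Y : C} (f : X ⟶ Y) :
    (resolutionObjMap π f).f 0 ≫ (resolutionObj π Y).π.f 0 = (resolutionObj π X).π.f 0 ≫ f := by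
  have h (X : C) : (resolutionObj π X).π.f 0 = (resolutionAugmentation π).app X :=
    ChainComplex.toSingle₀Equiv_symm_apply_f_zero _ _
  rw [h, h]
  exact (resolutionAugmentation π).naturality f

lemma homologyResolutionObjIso_naturality (k : ℕ) {X Y : C} (f : X ⟶ Y) :
    (G.mapHomologicalComplex _ ⋙ HomologicalComplex.homologyFunctor D _ k).map
          (resolutionObjMap π f) ≫
        (homologyResolutionObjIso π G k Y).hom =
      (homologyResolutionObjIso π G k X).hom ≫ ((mappedResolution π G).homology k).map f :=
  ((Iso.eq_inv_comp _).1
    (NatTrans.app_homology ((evaluation C D).map f) ((mappedResolution π G).sc k))).symm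

noncomputable def leftDerivedIsoHomology [HasProjectiveResolutions C] (k : ℕ) :
    G.leftDerived k ≅ (mappedResolution π G).homology k :=
  NatIso.ofComponents (fun X => (resolutionObj π X).isoLeftDerivedObj G k ≪≫
      homologyResolutionObjIso π G k X) fun {X Y} f => by
    have h := ProjectiveResolution.isoLeftDerivedObj_hom_naturality f (resolutionObj π X)
      (resolutionObj π Y) (resolutionObjMap π f) (resolutionObjMap_comp_π π f) G k
    rw [Iso.trans_hom, Iso.trans_hom, reassoc_of% h, Category.assoc]
    exact congr_arg _ (homologyResolutionObjIso_naturality π G k f)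

noncomputable def homologyMappedResolutionIso (n : ℕ) :
    (mappedResolution π G).homology (n + 1) ≅
      ((ShortComplex.mk _ _ (resolutionD_comp π n)).map
        ((Functor.whiskeringRight C C D).obj G)).homology :=
  (mappedResolution π G).homologyIsoSc' (n + 2) (n + 1) n (by simp) (by simp) ≪≫
    ShortComplex.homologyMapIso
      (((Functor.whiskeringRight C C D).obj G).mapShortComplex.mapIso (resolutionSc'Iso π n))

noncomputable def leftDerivedOneIso [HasProjectiveResolutions C] [PreservesFiniteColimits G] :
    G.leftDerived 1 ≅ leftSatellite π (G.leftDerived 0) :=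
  let H := (Functor.whiskeringRight C C D).obj G
  have h := (exact_whiskerLeft_kernelCover_comp_ι_kernelCover π).map_of_epi_of_preservesCokernel H
    inferInstance inferInstance
  let e := homologyIsoKernel ((ShortComplex.mk _ _ (resolutionD_comp π 0)).map H)
    (p := H.map (kernelCover π)) h (H.map_epi (kernelCover π)) (H.map (kernel.ι π))
    (H.map_comp _ _).symm
  leftDerivedIsoHomology π G 1 ≪≫ homologyMappedResolutionIso π G 0 ≪≫ e ≪≫
    leftSatelliteIso π G.leftDerivedZeroIsoSelf.symm

/-- In these degrees the complex at `X` is the complex one degree lower at `Ω X`. -/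
noncomputable def leftDerivedAddTwoIso [HasProjectiveResolutions C] (k : ℕ) :
    G.leftDerived (k + 2) ≅ leftSatellite π (G.leftDerived (k + 1)) :=
  leftDerivedIsoHomology π G (k + 2) ≪≫ homologyMappedResolutionIso π G (k + 1) ≪≫
    ShortComplex.mapHomologyIso ((ShortComplex.mk _ _ (resolutionD_comp π k)).map
      ((Functor.whiskeringRight C C D).obj G)) ((Functor.whiskeringLeft C C D).obj (kernel π)) ≪≫
    Functor.isoWhiskerLeft (kernel π)
      ((homologyMappedResolutionIso π G k).symm ≪≫ (leftDerivedIsoHomology π G (k + 1)).symm) ≪≫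
    (leftSatelliteIsoOfIsZero fun X =>
      G.isZero_leftDerived_obj_projective_succ k (F.obj X)).symm

/-- The left derived functors of a right exact functor are its iterated left satellites. -/
noncomputable def leftDerivedSuccIsoLeftSatellite [HasProjectiveResolutions C]
    [PreservesFiniteColimits G] :
    ∀ k : ℕ, G.leftDerived (k + 1) ≅ leftSatellite π (G.leftDerived k)
  | 0 => leftDerivedOneIso π G
  | k + 1 => leftDerivedAddTwoIso π G k

end FunctorialResolution

lemma homologyUnop_inv_naturality {V ι : Type*} [Category* V] [Abelian V] {c : ComplexShape ι}
    {K L : HomologicalComplex Vᵒᵖ c} (β : K ⟶ L) (i : ι) :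
    (HomologicalComplex.homologyMap β i).unop ≫ (K.homologyUnop i).inv =
      (L.homologyUnop i).inv ≫
        HomologicalComplex.homologyMap (K := L.unop) (L := K.unop)
          ((HomologicalComplex.unopFunctor V c).map β.op) i := by
  rw [Iso.comp_inv_eq, Category.assoc, Iso.eq_inv_comp]
  exact (congr(Quiver.Hom.unop $(HomologicalComplex.homologyOp_hom_naturality
    ((HomologicalComplex.unopFunctor V c).map β.op) i)))

section ExtFunctor

universe v t u₁

variable (R : Type t) [CommRing R] {C : Type u₁} [Category.{v} C] [Abelian C] [Linear R C]
  [HasExt.{v} C]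

/-- The functor `Ext^j(M, -)` built from the derived category, whose `R`-module structure is the
one coming from the `R`-linear structure of the category. -/
noncomputable def extFunctor (M : C) (j : ℕ) : C ⥤ ModuleCat.{v} R where
  obj X := ModuleCat.of R (Abelian.Ext.{v} M X j)
  map g := ModuleCat.ofHom ((Abelian.Ext.mk₀ g).postcompOfLinear R M (add_zero j))
  map_id X := by ext; simp
  map_comp f g := by ext; simp [← Abelian.Ext.mk₀_comp_mk₀]

variable {R} {M : C} (P : ProjectiveResolution M)

omit [Linear R C] in
lemma eq_zero_of_extMk_eq_zero {Y : C} (f : P.complex.X 0 ⟶ Y)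
    (hf : P.complex.d 1 0 ≫ f = 0) (h : P.extMk f 1 rfl hf = 0) : f = 0 := by
  rw [← P.extEquivCohomologyClass.apply_eq_iff_eq,
    P.extEquivCohomologyClass_extMk, P.extEquivCohomologyClass_zero,
    CochainComplex.HomComplex.CohomologyClass.mk_eq_zero_iff,
    CochainComplex.HomComplex.Cocycle.toSingleMk_mem_coboundaries_iff _ _ _ _ _ 1 (by simp)] at h
  obtain ⟨g, hg⟩ := h
  have isZero : IsZero (P.cochainComplex.X 1) :=
    CochainComplex.isZero_of_isStrictlyLE _ 0 1 (by lia)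
  rw [← cancel_epi (P.cochainComplexXIso (-((0 : ℕ) : ℤ)) 0 rfl).hom, comp_zero, ← hg,
    isZero.eq_of_src g 0, comp_zero]

omit [Linear R C] in
lemma extMk_congr {Y : C} {j : ℕ} {f g : P.complex.X j ⟶ Y} (h : f = g)
    (hf : P.complex.d (j + 1) j ≫ f = 0) :
    P.extMk f (j + 1) rfl hf = P.extMk g (j + 1) rfl (h ▸ hf) := by
  subst h
  rfl

lemma smul_extMk {Y : C} {j : ℕ} (f : P.complex.X j ⟶ Y)
    (hf : P.complex.d (j + 1) j ≫ f = 0) (r : R) :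
    r • P.extMk f (j + 1) rfl hf = P.extMk (r • f) (j + 1) rfl (by simp [hf]) := by
  rw [Abelian.Ext.smul_eq_comp_mk₀, P.extMk_comp_mk₀]
  congr 1
  simp

omit [HasExt.{v} C] in
variable (R) in
lemma d_comp_eq_zero_of_mem_ker {X : C} {j : ℕ} (f : P.complex.X j ⟶ X)
    (hf : ((P.complex.linearYonedaObj R X).sc j).g f = 0) : P.complex.d (j + 1) j ≫ f = 0 := by
  have h (k : ℕ) (hk : k = j + 1) : (P.complex.linearYonedaObj R X).d j k f = 0 →
      P.complex.d (j + 1) j ≫ f = 0 := by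
    subst hk
    exact id
  exact h _ (CochainComplex.next ℕ j) hf

variable (R) in
/-- Sending a cocycle `P_j ⟶ X` to its class in `Ext^j(M, X)`. -/
noncomputable def extMkHom (X : C) (j : ℕ) :
    ((P.complex.linearYonedaObj R X).sc j).moduleCatLeftHomologyData.K ⟶
      (extFunctor R M j).obj X :=
  ModuleCat.ofHom
  { toFun f := P.extMk (f.1 : P.complex.X j ⟶ X) (j + 1) rfl (d_comp_eq_zero_of_mem_ker R P _ f.2)
    map_add' _ _ := (P.add_extMk _ _ _ _ _ _).symm
    map_smul' r _ := (smul_extMk P _ _ r).symm }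

instance epi_extMkHom (X : C) (j : ℕ) : Epi (extMkHom R P X j) := by
  refine (ModuleCat.epi_iff_surjective _).2 fun x => ?_
  obtain ⟨f, hf, rfl⟩ := P.extMk_surjective x (j + 1) rfl
  refine ⟨⟨f, ?_⟩, rfl⟩
  have h (k : ℕ) (hk : k = j + 1) : (P.complex.linearYonedaObj R X).d j k f = 0 := by
    subst hk
    exact hf
  exact h _ (CochainComplex.next ℕ j)

lemma f'_comp_extMkHom (X : C) (j : ℕ) :
    ((P.complex.linearYonedaObj R X).sc j).moduleCatLeftHomologyData.f' ≫ extMkHom R P X j = 0 := by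
  ext (f : P.complex.X ((ComplexShape.up ℕ).prev j) ⟶ X)
  have key (i : ℕ) (f : P.complex.X i ⟶ X) (hf : P.complex.d (j + 1) j ≫ P.complex.d j i ≫ f = 0) :
      P.extMk (P.complex.d j i ≫ f) (j + 1) rfl hf = 0 := by
    by_cases hij : i + 1 = j
    · exact (P.extMk_eq_zero_iff _ (j + 1) rfl hf i hij).2 ⟨f, rfl⟩
    · simp [P.complex.shape j i hij]
  exact key _ f (by simp)

lemma exact_f'_extMkHom (X : C) (j : ℕ) :
    (ShortComplex.mk _ _ (f'_comp_extMkHom (R := R) P X j)).Exact := by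
  refine (ShortComplex.moduleCat_exact_iff _).2 fun f hf => ?_
  obtain ⟨f, hker⟩ := f
  have hcocycle := d_comp_eq_zero_of_mem_ker R P f hker
  have key : ∃ g : P.complex.X ((ComplexShape.up ℕ).prev j) ⟶ X,
      P.complex.d j ((ComplexShape.up ℕ).prev j) ≫ g = f := by
    obtain _ | j := j
    · exact ⟨0, by simp [eq_zero_of_extMk_eq_zero P f hcocycle hf]⟩
    · exact (P.extMk_eq_zero_iff _ _ rfl hcocycle _ (by simp)).1 hf
  obtain ⟨g, hg⟩ := key
  exact ⟨g, Subtype.ext hg⟩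

/-- Cocycles `P_j ⟶ X` modulo coboundaries, presented with `Ext^j(M, X)` as quotient. -/
noncomputable def extLeftHomologyData (X : C) (j : ℕ) :
    ((P.complex.linearYonedaObj R X).sc j).LeftHomologyData where
  __ := ((P.complex.linearYonedaObj R X).sc j).moduleCatLeftHomologyData
  H := (extFunctor R M j).obj X
  π := extMkHom R P X j
  wπ := f'_comp_extMkHom P X j
  hπ := (exact_f'_extMkHom P X j).gIsCokernel

/-- The functoriality in `X` of the complex `Hom(P, X)`. -/
noncomputable def linearYonedaObjMap {X Y : C} (g : X ⟶ Y) :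
    P.complex.linearYonedaObj R X ⟶ P.complex.linearYonedaObj R Y :=
  (HomologicalComplex.unopFunctor _ _).map
    ((NatTrans.mapHomologicalComplex ((linearYoneda R C).map g).rightOp _).app
      P.complex).op

noncomputable def extLeftHomologyMapData {X Y : C} (g : X ⟶ Y) (j : ℕ) :
    ShortComplex.LeftHomologyMapData
      ((HomologicalComplex.shortComplexFunctor _ _ j).map (linearYonedaObjMap (R := R) P g))
      (extLeftHomologyData P X j) (extLeftHomologyData P Y j) where
  φK := ShortComplex.cyclesMap' _ _ _
  φH := (extFunctor R M j).map g
  commi := ShortComplex.cyclesMap'_i _ _ _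
  commf' := ShortComplex.f'_cyclesMap' _ _ _
  commπ := by
    ext f
    refine (P.extMk_comp_mk₀ f.1 (j + 1) rfl (d_comp_eq_zero_of_mem_ker R P f.1 f.2) g).trans ?_
    have cyclesMap_apply := ConcreteCategory.congr_hom (ShortComplex.cyclesMap'_i
      ((HomologicalComplex.shortComplexFunctor _ _ j).map (linearYonedaObjMap (R := R) P g))
      (extLeftHomologyData P X j) (extLeftHomologyData P Y j)) f
    exact extMk_congr P cyclesMap_apply.symm _

noncomputable def homologyLinearYonedaObjIso (X : C) (j : ℕ) :
    (P.complex.linearYonedaObj R X).homology j ≅ (extFunctor R M j).obj X :=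
  (extLeftHomologyData P X j).homologyIso

lemma homologyLinearYonedaObjIso_hom_naturality {X Y : C} (g : X ⟶ Y) (j : ℕ) :
    HomologicalComplex.homologyMap (linearYonedaObjMap P g) j ≫
        (homologyLinearYonedaObjIso (R := R) P Y j).hom =
      (homologyLinearYonedaObjIso P X j).hom ≫ (extFunctor R M j).map g :=
  (extLeftHomologyMapData P g j).homologyMap_comm

variable [EnoughProjectives C]

omit [HasExt.{v} C] in
lemma isoExt_hom_naturality {X Y : C} (g : X ⟶ Y) (j : ℕ) :
    ((Ext R C j).obj (Opposite.op M)).map g ≫ (P.isoExt j Y).hom =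
      (P.isoExt j X).hom ≫ HomologicalComplex.homologyMap (linearYonedaObjMap P g) j := by
  let α := ((linearYoneda R C).map g).rightOp
  let K (Z : C) := (((linearYoneda R C).obj Z).rightOp.mapHomologicalComplex
    (ComplexShape.down ℕ)).obj P.complex
  let e (Z : C) : (((linearYoneda R C).obj Z).rightOp.leftDerived j).obj M ≅ (K Z).homology j :=
    P.isoLeftDerivedObj ((linearYoneda R C).obj Z).rightOp j
  let β : K Y ⟶ K X := (NatTrans.mapHomologicalComplex α (ComplexShape.down ℕ)).app P.complex
  have leftDerived_map : (NatTrans.leftDerived α j).app M =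
      (e Y).hom ≫ HomologicalComplex.homologyMap β j ≫ (e X).inv := P.leftDerived_app_eq α j
  change ((NatTrans.leftDerived α j).app M).unop ≫ (e Y).inv.unop ≫ ((K Y).homologyUnop j).inv =
    ((e X).inv.unop ≫ ((K X).homologyUnop j).inv) ≫
      HomologicalComplex.homologyMap (K := (K X).unop) (L := (K Y).unop)
        ((HomologicalComplex.unopFunctor _ _).map β.op) j
  rw [leftDerived_map, Category.assoc, ← homologyUnop_inv_naturality, ← Category.assoc, ← unop_comp,
    Iso.inv_hom_id_assoc, unop_comp, Category.assoc]

noncomputable def extIsoExtFunctor (M : C) (j : ℕ) :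
    (Ext R C j).obj (Opposite.op M) ≅ extFunctor R M j :=
  NatIso.ofComponents (fun X => (projectiveResolution M).isoExt j X ≪≫
      homologyLinearYonedaObjIso (projectiveResolution M) X j) fun g => by
    simp only [Iso.trans_hom, Category.assoc, reassoc_of% (isoExt_hom_naturality _ g j),
      homologyLinearYonedaObjIso_hom_naturality]

end ExtFunctor

section ExtSatellite

universe v t u₁

variable {R : Type t} [CommRing R] {C : Type u₁} [Category.{v} C] [Abelian C] [Linear R C]
  [HasExt.{v} C] {F : C ⥤ C} (π : F ⟶ 𝟭 C)

/-- The complex `ker (π.app X) ⟶ F X ⟶ X`, functorial in `X`. -/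
noncomputable def syzygySequence : C ⥤ ShortComplex C where
  obj X := ShortComplex.mk ((kernel.ι π).app X) (π.app X)
    (NatTrans.congr_app (kernel.condition π) X)
  map g := { τ₁ := (kernel π).map g, τ₂ := F.map g, τ₃ := g }

omit [HasExt.{v} C] in
lemma shortExact_syzygySequence [∀ X, Epi (π.app X)] (X : C) :
    ((syzygySequence π).obj X).ShortExact where
  exact := (ShortComplex.exact_kernel π).map ((evaluation C C).obj X)
  mono_f := inferInstanceAs (Mono ((kernel.ι π).app X))
  epi_g := inferInstanceAs (Epi (π.app X))

variable (R) in
/-- The connecting homomorphisms `Ext^j(M, X) ⟶ Ext^(j+1)(M, ker (π.app X))`. -/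
noncomputable def extFunctorδ [∀ X, Epi (π.app X)] (M : C) (j : ℕ) :
    extFunctor R M j ⟶ kernel π ⋙ extFunctor R M (j + 1) where
  app X := ModuleCat.ofHom ((shortExact_syzygySequence π X).extClass.postcompOfLinear R M rfl)
  naturality X Y g := by
    ext (x : Abelian.Ext M X j)
    have extClass_naturality := ShortComplex.ShortExact.extClass_naturality
      (shortExact_syzygySequence π X) (shortExact_syzygySequence π Y) ((syzygySequence π).map g)
    refine (Abelian.Ext.comp_assoc_of_second_deg_zero x (Abelian.Ext.mk₀ g) _ rfl).trans ?_
    refine Eq.trans ?_ (Abelian.Ext.comp_assoc_of_third_deg_zero x _ _ rfl).symm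
    exact congr(x.comp $extClass_naturality.symm _)

/-- Dimension shifting: if `Ext^j(M, -)` vanishes on the cover `F X`, then the connecting
homomorphism embeds `Ext^j(M, X)` into `Ext^(j+1)(M, Ω X)`. -/
noncomputable def extFunctorIsoLeftSatellite [∀ X, Epi (π.app X)] {M : C} {j : ℕ}
    (hM : ∀ X, Subsingleton (Abelian.Ext M (F.obj X) j)) :
    extFunctor R M j ≅ leftSatellite π (extFunctor R M (j + 1)) :=
  have (X : C) : Mono ((extFunctorδ R π M j).app X) := by
    refine (ModuleCat.mono_iff_injective _).2 ((injective_iff_map_eq_zero _).2 fun x hx => ?_)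
    obtain ⟨y, rfl⟩ :=
      Abelian.Ext.covariant_sequence_exact₃ M (shortExact_syzygySequence π X) x rfl hx
    obtain rfl : y = 0 := (hM X).elim _ _
    exact Abelian.Ext.zero_comp ..
  have w (X : C) : (extFunctorδ R π M j).app X ≫
      (extFunctor R M (j + 1)).map ((kernel.ι π).app X) = 0 := by
    ext (x : Abelian.Ext M X j)
    refine (Abelian.Ext.comp_assoc_of_third_deg_zero x _ _ rfl).trans ?_
    exact congr(x.comp $((shortExact_syzygySequence π X).extClass_comp) _).trans (x.comp_zero ..)
  isoLeftSatelliteOfExact (extFunctorδ R π M j) w fun X =>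
    (ShortComplex.moduleCat_exact_iff _).2 fun y hy =>
      Abelian.Ext.covariant_sequence_exact₁ M (shortExact_syzygySequence π X) y hy rfl

end ExtSatellite

section ExtEvaluation

open Abelian
open scoped TensorProduct

variable {B : Type u} [CommRing B]

lemma function_exact_precomp_mk₀ {S : ShortComplex (ModuleCat.{u} B)} (hS : S.ShortExact)
    (X : ModuleCat.{u} B) (j : ℕ) :
    Function.Exact ((Ext.mk₀ S.g).precompOfLinear B X (zero_add j))
      ((Ext.mk₀ S.f).precompOfLinear B X (zero_add j)) :=
  (ShortComplex.ab_exact_iff_function_exact _).1 (Ext.contravariant_sequence_exact₂' hS X j)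

lemma function_exact_precomp_extClass {S : ShortComplex (ModuleCat.{u} B)} (hS : S.ShortExact)
    (X : ModuleCat.{u} B) (j : ℕ) :
    Function.Exact ((Ext.mk₀ S.f).precompOfLinear B X (zero_add j))
      (hS.extClass.precompOfLinear B X (add_comm 1 j)) :=
  (ShortComplex.ab_exact_iff_function_exact _).1
    (Ext.contravariant_sequence_exact₁' hS X j (j + 1) (add_comm 1 j))

lemma function_exact_postcomp_mk₀ {S : ShortComplex (ModuleCat.{u} B)} (hS : S.ShortExact)
    (M : ModuleCat.{u} B) (j : ℕ) :
    Function.Exact ((extFunctor B M j).map S.f) ((extFunctor B M j).map S.g) :=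
  (ShortComplex.ab_exact_iff_function_exact _).1 (Ext.covariant_sequence_exact₂' M hS j)

lemma precomp_mk₀_zero_injective {M' M : ModuleCat.{u} B} (f : M' ⟶ M) [Epi f]
    (X : ModuleCat.{u} B) :
    Function.Injective ((Ext.mk₀ f).precompOfLinear B X (zero_add 0)) :=
  fun _ _ h => Ext.homEquiv₀.injective ((cancel_epi f).1 (Ext.homEquiv₀.symm.injective (by
    simpa [← Ext.mk₀_comp_mk₀] using h)))

/-- The evaluation map `Ext^j(M, B) ⊗ X → Ext^j(M, X)`, `e ⊗ x ↦ x ∘ e`, where `x` is regarded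
as the linear map `B → X` sending `1` to `x`. -/
noncomputable def extEval (M : ModuleCat.{u} B) (j : ℕ) (X : ModuleCat.{u} B) :
    Ext.{u} M (ModuleCat.of B B) j ⊗[B] X →ₗ[B] Ext.{u} M X j :=
  TensorProduct.lift ((Ext.bilinearCompOfLinear B M (ModuleCat.of B B) X j 0 j (add_zero j)).compl₂
    ((LinearMap.ringLmapEquivSelf B B X).symm ≪≫ₗ
      (ModuleCat.homLinearEquiv (M := ModuleCat.of B B) (S := B)).symm ≪≫ₗ
      Ext.linearEquiv₀.symm).toLinearMap)

lemma map_comp_extEval (M : ModuleCat.{u} B) (j : ℕ) {X Y : ModuleCat.{u} B} (g : X ⟶ Y) :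
    ((extFunctor B M j).map g).hom ∘ₗ extEval M j X =
      extEval M j Y ∘ₗ LinearMap.lTensor _ g.hom := by
  refine TensorProduct.ext' fun e x => ?_
  have toSpanSingleton_comp :
      ModuleCat.ofHom (LinearMap.toSpanSingleton B X x) ≫ g =
        ModuleCat.ofHom (LinearMap.toSpanSingleton B Y (g.hom x)) := by
    ext
    simp
  exact (Ext.comp_assoc_of_third_deg_zero e _ _ (add_zero j)).trans
    congr(e.comp $((Ext.mk₀_comp_mk₀ _ _).trans congr(Ext.mk₀ $toSpanSingleton_comp)) _)

lemma precomp_comp_extEval {M' M : ModuleCat.{u} B} {a : ℕ} (α : Ext.{u} M' M a)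
    (X : ModuleCat.{u} B) {b c : ℕ} (h : a + b = c) :
    α.precompOfLinear B X h ∘ₗ extEval M b X =
      extEval M' c X ∘ₗ LinearMap.rTensor _ (α.precompOfLinear B _ h) := by
  ext e x
  exact (Ext.comp_assoc_of_third_deg_zero α e _ h).symm

/-- The identification of `Ext^0(M, X)` with the module of linear maps `M → X`. -/
noncomputable def extZeroEquiv (M X : ModuleCat.{u} B) : Ext.{u} M X 0 ≃ₗ[B] (M →ₗ[B] X) :=
  Ext.linearEquiv₀ ≪≫ₗ ModuleCat.homLinearEquiv

lemma extZeroEquiv_mk₀ {M X : ModuleCat.{u} B} (f : M ⟶ X) :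
    extZeroEquiv M X (Ext.mk₀ f) = f.hom :=
  congr(ModuleCat.Hom.hom $(Ext.homEquiv₀.apply_symm_apply f))

lemma extZeroEquiv_comp_extEval (M X : ModuleCat.{u} B) :
    (extZeroEquiv M X).toLinearMap ∘ₗ extEval M 0 X =
      dualTensorHom B M X ∘ₗ (extZeroEquiv M (ModuleCat.of B B)).toLinearMap.rTensor X := by
  refine TensorProduct.ext' fun e x => ?_
  obtain ⟨f, rfl⟩ := Ext.homEquiv₀.symm.surjective e
  refine congr(extZeroEquiv M X $(Ext.mk₀_comp_mk₀ f _)).trans ((extZeroEquiv_mk₀ _).trans ?_)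
  ext m
  exact congr($(extZeroEquiv_mk₀ f) m • x).symm

lemma extEval_zero_bijective (M X : ModuleCat.{u} B) [Module.Finite B M] [Module.Projective B M] :
    Function.Bijective (extEval M 0 X) := by
  refine (Function.Bijective.of_comp_iff' (extZeroEquiv M X).bijective _).1 ?_
  have := congr(Function.Bijective $(extZeroEquiv_comp_extEval M X))
  exact this.mpr (dualTensorHom_bijective.comp (LinearEquiv.rTensor X (extZeroEquiv M _)).bijective)

lemma extEval_zero_injective (M X : ModuleCat.{u} B) [Module.Finite B M] [Module.Flat B X] :
    Function.Injective (extEval M 0 X) := by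
  obtain ⟨n, f, hf⟩ := Module.Finite.exists_fin' B M
  have : Epi (ModuleCat.ofHom f) := (ModuleCat.epi_iff_surjective _).2 hf
  refine Function.Injective.of_comp
    (f := (Ext.mk₀ (ModuleCat.ofHom f)).precompOfLinear B X (zero_add 0)) ?_
  have := congr(Function.Injective
    $(precomp_comp_extEval (Ext.mk₀ (ModuleCat.ofHom f)) X (zero_add 0)))
  exact this.mpr ((extEval_zero_bijective (ModuleCat.of B (Fin n → B)) X).1.comp
    (Module.Flat.rTensor_preserves_injective_linearMap _ (precomp_mk₀_zero_injective _ _)))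

lemma extEval_bijective_of_flat [IsNoetherianRing B] (X : ModuleCat.{u} B) [Module.Flat B X]
    (j : ℕ) (M : ModuleCat.{u} B) [Module.Finite B M] : Function.Bijective (extEval M j X) := by
  induction j generalizing M with
  | zero =>
    obtain ⟨n, f, hf⟩ := Module.Finite.exists_fin' B M
    have shortExact := LinearMap.shortExact_shortComplexKer hf
    have : Epi f.shortComplexKer.g := shortExact.epi_g
    exact LinearMap.bijective_of_bijective_of_injective_of_left_exact _ _ _ _ _ _ _
      (precomp_comp_extEval _ _ _) (precomp_comp_extEval _ _ _)
      (Module.Flat.rTensor_exact X (function_exact_precomp_mk₀ shortExact _ 0))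
      (function_exact_precomp_mk₀ shortExact _ 0)
      (extEval_zero_bijective (ModuleCat.of B (Fin n → B)) X)
      (extEval_zero_injective (ModuleCat.of B (LinearMap.ker f)) X)
      (Module.Flat.rTensor_preserves_injective_linearMap _ (precomp_mk₀_zero_injective _ _))
      (precomp_mk₀_zero_injective f.shortComplexKer.g X)
  | succ j ih =>
    obtain ⟨n, f, hf⟩ := Module.Finite.exists_fin' B M
    have shortExact := LinearMap.shortExact_shortComplexKer hf
    have : Projective f.shortComplexKer.X₂ :=
      inferInstanceAs (Projective (ModuleCat.of B (Fin n → B)))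
    have surjective (Y) := precomp_extClass_surjective_of_projective_X₂ Y shortExact j
    exact LinearMap.bijective_of_surjective_of_bijective_of_right_exact _ _ _ _ _ _ _
      (precomp_comp_extEval _ _ _) (precomp_comp_extEval _ _ _)
      (rTensor_exact X (function_exact_precomp_extClass shortExact _ j) (surjective _))
      (function_exact_precomp_extClass shortExact _ j)
      (ih (ModuleCat.of B (Fin n → B))).2 (ih (ModuleCat.of B (LinearMap.ker f)))
      (LinearMap.rTensor_surjective _ (surjective _)) (surjective _)

lemma extFunctor_map_surjective (M : ModuleCat.{u} B) {S : ShortComplex (ModuleCat.{u} B)}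
    (hS : S.ShortExact) (j : ℕ) (h : Subsingleton (Ext.{u} M S.X₁ (j + 1))) :
    Function.Surjective ((extFunctor B M j).map S.g) :=
  fun y => Ext.covariant_sequence_exact₃ M hS y rfl (h.elim _ _)

/-- The natural surjection onto `X` from the free module on the underlying set of `X`. -/
noncomputable abbrev freeCover (B : Type u) [CommRing B] :
    forget (ModuleCat.{u} B) ⋙ ModuleCat.free B ⟶ 𝟭 (ModuleCat.{u} B) :=
  (ModuleCat.adj B).counit

instance (X : ModuleCat.{u} B) :
    Module.Free B ((forget (ModuleCat.{u} B) ⋙ ModuleCat.free B).obj X) :=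
  inferInstanceAs (Module.Free B (X →₀ B))

lemma extEval_bijective [IsNoetherianRing B] (M : ModuleCat.{u} B) [Module.Finite B M] (n : ℕ)
    (h : ∀ X, Subsingleton (Ext.{u} M X (n + 1))) (X : ModuleCat.{u} B) :
    Function.Bijective (extEval M n X) := by
  have shortExact (X) := shortExact_syzygySequence (freeCover B) X
  have surjective (X) := extFunctor_map_surjective M (shortExact X) n (h _)
  have bijective_free (X) : Function.Bijective
      (extEval M n ((forget (ModuleCat.{u} B) ⋙ ModuleCat.free B).obj X)) :=
    extEval_bijective_of_flat _ n M
  have extEval_surjective (X) : Function.Surjective (extEval M n X) := by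
    intro y
    obtain ⟨z, rfl⟩ := surjective X y
    obtain ⟨w, rfl⟩ := (bijective_free X).2 z
    exact ⟨_, congr($(map_comp_extEval M n ((freeCover B).app X)) w).symm⟩
  have epi := (ModuleCat.epi_iff_surjective _).1 (shortExact X).epi_g
  exact LinearMap.bijective_of_surjective_of_bijective_of_right_exact _ _ _ _ _ _ _
    (map_comp_extEval _ _ _) (map_comp_extEval _ _ _)
    (lTensor_exact _
      ((ShortComplex.ShortExact.moduleCat_exact_iff_function_exact _).1 (shortExact X).exact) epi)
    (function_exact_postcomp_mk₀ (shortExact X) M n) (extEval_surjective _) (bijective_free X)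
    (LinearMap.lTensor_surjective _ epi) (surjective X)

/-- In the top nonvanishing degree `Ext^n(M, -)` is right exact, hence given by a tensor product
(Eilenberg–Watts). -/
noncomputable def tensorLeftExtIso [IsNoetherianRing B] (M : ModuleCat.{u} B) [Module.Finite B M]
    (n : ℕ) (h : ∀ X, Subsingleton (Ext.{u} M X (n + 1))) :
    tensorLeft ((extFunctor B M n).obj (ModuleCat.of B B)) ≅ extFunctor B M n :=
  NatIso.ofComponents
    (fun X => (LinearEquiv.ofBijective _ (extEval_bijective M n h X)).toModuleIso)
    (fun g => ModuleCat.hom_ext (map_comp_extEval M n g).symm)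

end ExtEvaluation

section Retraction

open scoped TensorProduct

variable {A B : Type u} [CommRing A] [CommRing B] [Algebra B A] {φ : A →+* B}

/-- If `φ` is a section of the structure map `B → A`, then restricting scalars along `φ` recovers
the `A`-module underlying a compatible pair of module structures over `A` and `B`. -/
def restrictScalarsSection (hφ : ∀ a, algebraMap B A (φ a) = a) (T : Type u) [AddCommGroup T]
    [Module A T] [Module B T] [IsScalarTower B A T] :
    (ModuleCat.restrictScalars φ).obj (ModuleCat.of B T) ≃ₗ[A] T where
  __ := AddEquiv.refl T
  map_smul' a (t : T) := (algebraMap_smul (M := T) A (φ a) t).symm.trans congr($(hφ a) • t)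

lemma isScalarTower_restrictScalars {E : ModuleCat.{u} B}
    (hE : ∀ (b : B) (e : E), b • e = φ (algebraMap B A b) • e) :
    letI : Module B ((ModuleCat.restrictScalars φ).obj E) := E.isModule
    IsScalarTower B A ((ModuleCat.restrictScalars φ).obj E) :=
  letI : Module B ((ModuleCat.restrictScalars φ).obj E) := E.isModule
  ⟨fun b a (e : E) => by
    change φ (b • a) • e = b • φ a • e
    rw [hE b, ← mul_smul, ← map_mul, Algebra.smul_def]⟩

/-- `E ⊗_A (A ⊗_B -) ≅ E ⊗_B -` for a `B`-module `E` whose structure factors through `A`. -/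
noncomputable def tensorLeftRestrictScalarsIso (hφ : ∀ a, algebraMap B A (φ a) = a)
    (E : ModuleCat.{u} B) (hE : ∀ (b : B) (e : E), b • e = φ (algebraMap B A b) • e) :
    (tensorLeft (ModuleCat.of B A) ⋙ ModuleCat.restrictScalars φ) ⋙
        tensorLeft ((ModuleCat.restrictScalars φ).obj E) ≅
      tensorLeft E ⋙ ModuleCat.restrictScalars φ :=
  letI : Module B ((ModuleCat.restrictScalars φ).obj E) := E.isModule
  have := isScalarTower_restrictScalars hE
  let Ē : Type u := (ModuleCat.restrictScalars φ).obj E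
  NatIso.ofComponents
    (fun X => LinearEquiv.toModuleIso
      (((restrictScalarsSection hφ (A ⊗[B] X)).lTensor Ē ≪≫ₗ
        TensorProduct.AlgebraTensorModule.cancelBaseChange B A A Ē X) ≪≫ₗ
        (restrictScalarsSection hφ (Ē ⊗[B] X)).symm))
    (fun {X Y} g => ModuleCat.hom_ext (TensorProduct.ext (LinearMap.ext fun e =>
      LinearMap.ext fun (t : A ⊗[B] X) => by
        induction t using TensorProduct.induction_on with
        | zero => exact (map_zero _).trans (map_zero _).symm
        | tmul a x => rfl
        | add t u ht hu =>
          exact (map_add _ _ _).trans (congr($ht + $hu).trans (map_add _ _ _).symm))))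

end Retraction

section Duality

open Abelian

variable {A B : Type u} [CommRing A] [CommRing B] [Algebra B A] {φ : A →+* B}

lemma isZero_extFunctor (M : ModuleCat.{u} B) {n j : ℕ}
    [HasProjectiveDimensionLE M n] (hj : n < j) : IsZero (extFunctor B M j) :=
  Functor.isZero _ fun X =>
    have := HasProjectiveDimensionLT.subsingleton M (n + 1) j hj X
    ModuleCat.isZero_of_subsingleton (ModuleCat.of B (Ext.{u} M X j))

lemma smul_ext_eq_zero {M X : ModuleCat.{u} B} {b : B} (hb : ∀ m : M, b • m = 0) {j : ℕ}
    (x : Ext.{u} M X j) : b • x = 0 := by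
  have smul_id : b • 𝟙 M = 0 := ModuleCat.hom_ext (LinearMap.ext hb)
  rw [← Ext.mk₀_id_comp x, ← Ext.smul_comp, ← Ext.mk₀_smul, smul_id, Ext.mk₀_zero, Ext.zero_comp]

lemma smul_ext_eq_section_smul (hφ : ∀ a, algebraMap B A (φ a) = a) {X : ModuleCat.{u} B} {j : ℕ}
    (b : B) (x : Ext.{u} (ModuleCat.of B A) X j) : b • x = φ (algebraMap B A b) • x := by
  rw [← sub_eq_zero, ← sub_smul]
  refine smul_ext_eq_zero (fun (a : A) => ?_) x
  rw [← algebraMap_smul A, map_sub, hφ, sub_self, zero_smul]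

variable (φ) in
/-- The `A`-module `Ext^n_B(A, B)`, which plays the role of `N̄` in the duality. -/
noncomputable abbrev dualizingModule (n : ℕ) : ModuleCat.{u} A :=
  (extFunctor B (ModuleCat.of B A) n ⋙ ModuleCat.restrictScalars φ).obj (ModuleCat.of B B)

/-- The functor `N ⊗_A Tor_k^B(A, -)`. -/
noncomputable abbrev tensorTor (φ : A →+* B) (N : ModuleCat.{u} A) (k : ℕ) :
    ModuleCat.{u} B ⥤ ModuleCat.{u} A :=
  ((Tor (ModuleCat.{u} B) k).obj (ModuleCat.of B A) ⋙ ModuleCat.restrictScalars φ) ⋙ tensorLeft N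

noncomputable def tensorTorSuccIsoLeftSatellite (N : ModuleCat.{u} A) [Module.Flat A N] (k : ℕ) :
    tensorTor φ N (k + 1) ≅ leftSatellite (freeCover B) (tensorTor φ N k) :=
  Functor.isoWhiskerRight (Functor.isoWhiskerRight
      (leftDerivedSuccIsoLeftSatellite (freeCover B) (tensorLeft (ModuleCat.of B A)) k) _ ≪≫
      leftSatelliteCompIso _ _ _) _ ≪≫
    leftSatelliteCompIso _ _ _

/-- The case `k = 0` of the duality. -/
noncomputable def tensorTorZeroIso [IsNoetherianRing B] [Module.Finite B A]
    (hφ : ∀ a, algebraMap B A (φ a) = a) (n : ℕ)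
    [HasProjectiveDimensionLE (ModuleCat.of B A) n] :
    tensorTor φ (dualizingModule φ n) 0 ≅
      extFunctor B (ModuleCat.of B A) n ⋙ ModuleCat.restrictScalars φ :=
  Functor.isoWhiskerRight (Functor.isoWhiskerRight
      (Functor.leftDerivedZeroIsoSelf (tensorLeft (ModuleCat.of B A))) _) _ ≪≫
    tensorLeftRestrictScalarsIso hφ _ (smul_ext_eq_section_smul hφ) ≪≫
    Functor.isoWhiskerRight (tensorLeftExtIso _ n fun X =>
      HasProjectiveDimensionLT.subsingleton (ModuleCat.of B A) (n + 1) (n + 1) le_rfl X) _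

lemma subsingleton_ext_of_flat [IsNoetherianRing B] {M : ModuleCat.{u} B} [Module.Finite B M]
    {j : ℕ} [Subsingleton (Ext.{u} M (ModuleCat.of B B) j)] (X : ModuleCat.{u} B)
    [Module.Flat B X] : Subsingleton (Ext.{u} M X j) :=
  (extEval_bijective_of_flat X j M).2.subsingleton

/-- Dimension shifting from the right exact functor `Ext^n_B(A, -)`: both sides are its iterated
left satellites. -/
noncomputable def tensorTorIsoExt [IsNoetherianRing B] [Module.Finite B A]
    (hφ : ∀ a, algebraMap B A (φ a) = a) {n : ℕ} [HasProjectiveDimensionLE (ModuleCat.of B A) n]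
    (h : ∀ j < n, Subsingleton (Ext.{u} (ModuleCat.of B A) (ModuleCat.of B B) j))
    [Module.Flat A (dualizingModule φ n)] : ∀ (k : ℕ) {j : ℕ}, k + j = n →
      (tensorTor φ (dualizingModule φ n) k ≅
        extFunctor B (ModuleCat.of B A) j ⋙ ModuleCat.restrictScalars φ)
  | 0, _, hj => tensorTorZeroIso hφ n ≪≫ eqToIso (by rw [← hj, zero_add])
  | k + 1, j, hj =>
    have := h j (by omega)
    have (X : ModuleCat.{u} B) := subsingleton_ext_of_flat (M := ModuleCat.of B A) (j := j)
      ((forget (ModuleCat.{u} B) ⋙ ModuleCat.free B).obj X)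
    tensorTorSuccIsoLeftSatellite _ k ≪≫
      leftSatelliteIso _ (tensorTorIsoExt hφ h k (j := j + 1) (by omega)) ≪≫
      (leftSatelliteCompIso _ _ _).symm ≪≫
      Functor.isoWhiskerRight (extFunctorIsoLeftSatellite (freeCover B) this).symm _

lemma mono_extFunctor_zero_map {M X Y : ModuleCat.{u} B} (f : X ⟶ Y) [Mono f] :
    Mono ((extFunctor B M 0).map f) := by
  refine (ModuleCat.mono_iff_injective _).2 fun (x y : Ext M X 0) hxy => ?_
  obtain ⟨g, rfl⟩ := Ext.homEquiv₀.symm.surjective x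
  obtain ⟨h, rfl⟩ := Ext.homEquiv₀.symm.surjective y
  refine congr_arg _ ((cancel_mono f).1 (Ext.homEquiv₀.symm.injective ?_))
  exact (Ext.mk₀_comp_mk₀ g f).symm.trans (Eq.trans hxy (Ext.mk₀_comp_mk₀ h f))

lemma isZero_tensorTor [IsNoetherianRing B] [Module.Finite B A]
    (hφ : ∀ a, algebraMap B A (φ a) = a) {n : ℕ} [HasProjectiveDimensionLE (ModuleCat.of B A) n]
    (h : ∀ j < n, Subsingleton (Ext.{u} (ModuleCat.of B A) (ModuleCat.of B B) j))
    [Module.Flat A (dualizingModule φ n)] {k : ℕ} (hk : n < k) :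
    IsZero (tensorTor φ (dualizingModule φ n) k) := by
  induction k, hk using Nat.le_induction with
  | base =>
    refine IsZero.of_iso (isZero_leftSatellite_of_mono fun X => ?_)
      (tensorTorSuccIsoLeftSatellite _ n ≪≫
        leftSatelliteIso _ (tensorTorIsoExt hφ h n (add_zero n)))
    have := mono_extFunctor_zero_map (M := ModuleCat.of B A) ((kernel.ι (freeCover B)).app X)
    exact inferInstanceAs (Mono ((ModuleCat.restrictScalars φ).map _))
  | succ k _ ih => exact (isZero_leftSatellite ih).of_iso (tensorTorSuccIsoLeftSatellite _ k)

end Duality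

section ExtAdjunction

open Abelian

universe w w' v₁ v₂ u₁ u₂

variable {C : Type u₁} [Category.{v₁} C] [Abelian C] [HasExt.{w} C]
  {D : Type u₂} [Category.{v₂} D] [Abelian D] [HasExt.{w'} D]
  {F : C ⥤ D} {G : D ⥤ C} [G.Additive] [PreservesFiniteLimits G] [PreservesFiniteColimits G]

/-- The map `Ext^j(F X, Y) → Ext^j(X, G Y)` induced by the unit of an adjunction `F ⊣ G` whose right
adjoint is exact. -/
noncomputable def extAdjunctionHom (adj : F ⊣ G) (X : C) (Y : D) (j : ℕ) :
    Ext.{w'} (F.obj X) Y j →+ Ext.{w} X (G.obj Y) j :=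
  ((Ext.mk₀ (adj.unit.app X)).precomp (G.obj Y) (zero_add j)).comp (G.mapExtAddHom (F.obj X) Y j)

lemma extAdjunctionHom_apply (adj : F ⊣ G) {X : C} {Y : D} {j : ℕ} (x : Ext.{w'} (F.obj X) Y j) :
    (extAdjunctionHom adj X Y j x : Ext.{w} _ _ _) =
      (Ext.mk₀ (adj.unit.app X)).comp (x.mapExactFunctor G) (zero_add j) := rfl

lemma extAdjunctionHom_comp (adj : F ⊣ G) {X X' : C} {Y : D} {a j k : ℕ}
    {α : Ext.{w} X X' a} {β : Ext.{w'} (F.obj X) (F.obj X') a}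
    (naturality : α.comp (Ext.mk₀ (adj.unit.app X')) (add_zero a) =
      (Ext.mk₀ (adj.unit.app X)).comp (β.mapExactFunctor G) (zero_add a))
    (x : Ext.{w'} (F.obj X') Y j) (h : a + j = k) :
    extAdjunctionHom adj X Y k (β.comp x h) = α.comp (extAdjunctionHom adj X' Y j x) h := by
  rw [extAdjunctionHom_apply, extAdjunctionHom_apply, Ext.mapExactFunctor_comp,
    ← Ext.comp_assoc _ _ _ (zero_add a) _ (by lia)]
  exact (congrArg (Ext.comp · _ h) naturality.symm).trans
    (Ext.comp_assoc _ _ _ (add_zero a) (zero_add j) (by lia))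

lemma extAdjunctionHom_mk₀_comp (adj : F ⊣ G) {X X' : C} (f : X' ⟶ X) {Y : D} {j : ℕ}
    (x : Ext.{w'} (F.obj X) Y j) :
    extAdjunctionHom adj X' Y j ((Ext.mk₀ (F.map f)).comp x (zero_add j)) =
      (Ext.mk₀ f).comp (extAdjunctionHom adj X Y j x : Ext.{w} _ _ _) (zero_add j) :=
  extAdjunctionHom_comp adj (by
    rw [Ext.mapExactFunctor_mk₀, Ext.mk₀_comp_mk₀, Ext.mk₀_comp_mk₀]
    exact congrArg Ext.mk₀ (adj.unit_naturality f).symm) x _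

lemma extAdjunctionHom_zero_bijective (adj : F ⊣ G) (X : C) (Y : D) :
    Function.Bijective (extAdjunctionHom adj X Y 0 : _ → Ext.{w} _ _ _) := by
  have (f : F.obj X ⟶ Y) : extAdjunctionHom adj X Y 0 (Ext.mk₀ f : Ext.{w'} _ _ _) =
      (Ext.mk₀ (adj.homEquiv X Y f) : Ext.{w} _ _ _) := by
    rw [extAdjunctionHom_apply, Ext.mapExactFunctor_mk₀, Ext.mk₀_comp_mk₀, adj.homEquiv_unit]
  refine (Function.Bijective.of_comp_iff (extAdjunctionHom adj X Y 0 : _ → Ext.{w} _ _ _)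
    (Ext.mk₀_bijective.{w'} (F.obj X) Y)).1 ?_
  exact (funext this : extAdjunctionHom adj X Y 0 ∘ Ext.mk₀ = Ext.mk₀ ∘ adj.homEquiv X Y) ▸
    (Ext.mk₀_bijective.{w} X (G.obj Y)).comp (adj.homEquiv X Y).bijective

variable [F.Additive] [PreservesFiniteLimits F] [PreservesFiniteColimits F]

lemma extAdjunctionHom_extClass_comp (adj : F ⊣ G) {S : ShortComplex C} (hS : S.ShortExact)
    {Y : D} {j : ℕ} (x : Ext.{w'} (F.obj S.X₁) Y j) :
    extAdjunctionHom adj S.X₃ Y (j + 1)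
        ((hS.map_of_exact F).extClass.comp x (add_comm 1 j)) =
      hS.extClass.comp (extAdjunctionHom adj S.X₁ Y j x : Ext.{w} _ _ _) (add_comm 1 j) := by
  let δ : Ext.{w'} (F.obj S.X₃) (F.obj S.X₁) 1 := (hS.map_of_exact F).extClass
  have map_δ : δ.mapExactFunctor G = ((hS.map_of_exact F).map_of_exact G).extClass :=
    Ext.mapExactFunctor_extClass G (hS.map_of_exact F)
  refine extAdjunctionHom_comp adj (β := δ) (.trans ?_ (congrArg (Ext.comp _ · _) map_δ.symm)) x _
  exact ShortComplex.ShortExact.extClass_naturality hS ((hS.map_of_exact F).map_of_exact G)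
    (S.mapNatTrans adj.unit)

attribute [local instance] Ext.subsingleton_of_projective in
lemma extAdjunctionHom_bijective [EnoughProjectives C]
    (adj : F ⊣ G) (X : C) (Y : D) (j : ℕ) :
    Function.Bijective (extAdjunctionHom adj X Y j : _ → Ext.{w} _ _ _) := by
  induction j generalizing X with
  | zero => exact extAdjunctionHom_zero_bijective adj X Y
  | succ j ih =>
    let P : ProjectivePresentation X := Classical.arbitrary _
    let S := ShortComplex.mk _ _ (kernel.condition P.f)
    have : Projective S.X₂ := P.projective
    have : Projective (S.map F).X₂ := adj.map_projective _ P.projective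
    have hS : S.ShortExact := { exact := ShortComplex.exact_kernel P.f }
    have hFS := hS.map_of_exact F
    refine AddMonoidHom.bijective_of_surjective_of_bijective_of_right_exact _ _ _ _
      (extAdjunctionHom adj S.X₂ Y j) (extAdjunctionHom adj S.X₁ Y j)
      (extAdjunctionHom adj S.X₃ Y (j + 1))
      (AddMonoidHom.ext fun _ => (extAdjunctionHom_mk₀_comp adj S.f _).symm)
      (AddMonoidHom.ext fun _ => (extAdjunctionHom_extClass_comp adj hS _).symm)
      ((ShortComplex.ab_exact_iff_function_exact _).1
        (Ext.contravariant_sequence_exact₁' hFS Y j (j + 1) (add_comm 1 j)))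
      ((ShortComplex.ab_exact_iff_function_exact _).1
        (Ext.contravariant_sequence_exact₁' hS (G.obj Y) j (j + 1) (add_comm 1 j)))
      (ih _).surjective (ih _)
      (fun x => Ext.contravariant_sequence_exact₃ hFS _ x (by subsingleton) (add_comm 1 j))
      (fun x => Ext.contravariant_sequence_exact₃ hS _ x (by subsingleton) (add_comm 1 j))

end ExtAdjunction

section ExtBaseChange

open Abelian
open scoped TensorProduct

variable {B C : Type u} [CommRing B] [CommRing C] [Algebra B C]

lemma extAdjunctionHom_algebraMap_smul {M : ModuleCat.{u} B} {Y : ModuleCat.{u} C} {j : ℕ} (b : B)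
    (x : Ext.{u} ((ModuleCat.extendScalars.{u, u, u} (algebraMap B C)).obj M) Y j) :
    extAdjunctionHom (ModuleCat.extendRestrictScalarsAdj (algebraMap B C)) M Y j
        (algebraMap B C b • x) =
      b • (extAdjunctionHom (ModuleCat.extendRestrictScalarsAdj (algebraMap B C)) M Y j x :
        Ext.{u} _ _ _) := by
  have map_smul_id : (ModuleCat.restrictScalars (algebraMap B C)).map (algebraMap B C b • 𝟙 Y) =
      b • 𝟙 _ := rfl
  rw [Ext.smul_eq_comp_mk₀, extAdjunctionHom_apply, Ext.mapExactFunctor_comp,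
    Ext.mapExactFunctor_mk₀, map_smul_id, ← Ext.smul_eq_comp_mk₀, Ext.comp_smul,
    extAdjunctionHom_apply]

lemma extAdjunctionHom_extendRestrictScalars_bijective [Module.Flat B C] (M : ModuleCat.{u} B)
    (Y : ModuleCat.{u} C) (j : ℕ) :
    Function.Bijective (extAdjunctionHom
      (ModuleCat.extendRestrictScalarsAdj.{u, u, u} (algebraMap B C)) M Y j :
        _ → Ext.{u} _ _ _) := by
  have := ModuleCat.preservesFiniteLimits_extendScalars_of_flat
    (RingHom.flat_algebraMap_iff.2 ‹Module.Flat B C›)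
  have := (ModuleCat.extendRestrictScalarsAdj.{u, u, u} (algebraMap B C)).left_adjoint_additive
  exact extAdjunctionHom_bijective _ M Y j

noncomputable def restrictScalarsSelfEquiv :
    (ModuleCat.restrictScalars (algebraMap B C)).obj (ModuleCat.of C C) ≃ₗ[B] C :=
  { AddEquiv.refl C with map_smul' b (c : C) := (Algebra.smul_def b c).symm }

/-- The isomorphism `Ext_B^j(M, B) ⊗_B C ≅ Ext_C^j(C ⊗_B M, C)` for `C` flat over `B`. The right
side is presented by a `C`-module `W`, because `Ext` over `C` carries no `B`-module structure. -/
noncomputable def extTensorEquiv [IsNoetherianRing B] [Module.Flat B C] (M : ModuleCat.{u} B)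
    [Module.Finite B M] (j : ℕ)
    {W : Type*} [AddCommGroup W] [Module B W] [Module C W] [IsScalarTower B C W]
    (e : Ext.{u} ((ModuleCat.extendScalars (algebraMap B C)).obj M) (ModuleCat.of C C) j ≃ₗ[C] W) :
    Ext.{u} M (ModuleCat.of B B) j ⊗[B] C ≃ₗ[B] W :=
  let adjunctionEquiv := AddEquiv.ofBijective _
    (extAdjunctionHom_extendRestrictScalars_bijective M (ModuleCat.of C C) j)
  have map_smul (b : B) (x) :
      adjunctionEquiv (algebraMap B C b • x) = b • adjunctionEquiv x :=
    extAdjunctionHom_algebraMap_smul b x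
  let adjunctionLinearEquiv : W ≃ₗ[B]
      Ext.{u} M ((ModuleCat.restrictScalars (algebraMap B C)).obj (ModuleCat.of C C)) j :=
    (e.symm.toAddEquiv.trans adjunctionEquiv).toLinearEquiv fun b w => by
      have e_symm_smul : e.symm (b • w) = algebraMap B C b • e.symm w := by
        rw [← e.symm.map_smul, algebraMap_smul]
      exact (congrArg adjunctionEquiv e_symm_smul).trans (map_smul b _)
  LinearEquiv.ofBijective _ (extEval_bijective_of_flat (ModuleCat.of B C) j M) ≪≫ₗ
    ((extFunctor B M j).mapIso restrictScalarsSelfEquiv.toModuleIso).symm.toLinearEquiv ≪≫ₗ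
    adjunctionLinearEquiv.symm

end ExtBaseChange

section Rees

open Abelian RingTheory.Sequence

variable {C : Type u} [CommRing C] {X Y : ModuleCat.{u} C}

/-- The connecting homomorphism of the sequence `0 ⟶ Y ⟶ Y ⟶ Y / r Y ⟶ 0`. -/
noncomputable def extSmulδ {r : C} (hr : IsSMulRegular Y r) (j : ℕ) :
    Ext.{u} X (ModuleCat.of C (QuotSMulTop r Y)) j →ₗ[C] Ext.{u} X Y (j + 1) :=
  hr.smulShortComplex_shortExact.extClass.postcompOfLinear C X rfl

lemma extSmulδ_surjective {r : C} (hr : IsSMulRegular Y r) (hX : ∀ x : X, r • x = 0) (j : ℕ) :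
    Function.Surjective (extSmulδ (X := X) hr j) := fun x =>
  Ext.covariant_sequence_exact₁ X hr.smulShortComplex_shortExact x (by
    rw [ModuleCat.smulShortComplex_f_eq_smul_id]
    exact (Ext.smul_eq_comp_mk₀ x r).symm.trans (smul_ext_eq_zero hX x)) rfl

lemma extSmulδ_injective {r : C} (hr : IsSMulRegular Y r) (j : ℕ) [Subsingleton (Ext.{u} X Y j)] :
    Function.Injective (extSmulδ (X := X) hr j) := by
  refine (injective_iff_map_eq_zero _).2 fun x hx => ?_
  obtain ⟨y, rfl⟩ := Ext.covariant_sequence_exact₃ X hr.smulShortComplex_shortExact x rfl hx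
  exact (congrArg (Ext.comp · _ _) (Subsingleton.elim (α := Ext X Y j) y 0)).trans
    (Ext.zero_comp _ _ _ _ _)

lemma subsingleton_ext_zero_of_isSMulRegular {r : C} (hr : IsSMulRegular Y r)
    (hX : ∀ x : X, r • x = 0) : Subsingleton (Ext.{u} X Y 0) := by
  refine (extZeroEquiv X Y).subsingleton_congr.2 ⟨fun f g => LinearMap.ext fun x => hr ?_⟩
  simp only [← map_smul, hX, map_zero]

lemma subsingleton_ext_of_isWeaklyRegular {rs : List C} (reg : IsWeaklyRegular Y rs)
    (hX : ∀ r ∈ rs, ∀ x : X, r • x = 0) {j : ℕ} (hj : j < rs.length) :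
    Subsingleton (Ext.{u} X Y j) := by
  induction rs generalizing Y j with
  | nil => simp at hj
  | cons r rs ih =>
    obtain ⟨hr, reg⟩ := (isWeaklyRegular_cons_iff _ _ _).1 reg
    obtain ⟨hrX, hX⟩ := List.forall_mem_cons.1 hX
    cases j with
    | zero => exact subsingleton_ext_zero_of_isSMulRegular hr hrX
    | succ j =>
      have := ih (Y := ModuleCat.of C (QuotSMulTop r Y)) reg hX (Nat.lt_of_succ_lt_succ hj)
      exact (extSmulδ_surjective hr hrX j).subsingleton

/-- Rees' theorem: dividing by a `Y`-regular element that kills `X` lowers the degree by one. -/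
lemma nonempty_ext_length_equiv {rs : List C} (reg : IsWeaklyRegular Y rs)
    (hX : ∀ r ∈ rs, ∀ x : X, r • x = 0) :
    Nonempty (Ext.{u} X Y rs.length ≃ₗ[C] (X →ₗ[C] Y ⧸ (Ideal.ofList rs • ⊤ : Submodule C Y))) := by
  induction rs generalizing Y with
  | nil =>
    exact ⟨extZeroEquiv X Y ≪≫ₗ LinearEquiv.congrRight
      (Submodule.quotEquivOfEqBot _ (by simp)).symm⟩
  | cons r rs ih =>
    obtain ⟨hr, reg'⟩ := (isWeaklyRegular_cons_iff _ _ _).1 reg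
    obtain ⟨hrX, hX'⟩ := List.forall_mem_cons.1 hX
    have := subsingleton_ext_of_isWeaklyRegular reg hX (Nat.lt_succ_self rs.length)
    obtain ⟨e⟩ := ih (Y := ModuleCat.of C (QuotSMulTop r Y)) reg' hX'
    exact ⟨(LinearEquiv.ofBijective (extSmulδ hr rs.length)
        ⟨extSmulδ_injective hr _, extSmulδ_surjective hr hrX _⟩).symm ≪≫ₗ e ≪≫ₗ
      LinearEquiv.congrRight
        (Submodule.quotOfListConsSMulTopEquivQuotSMulTopInner Y r rs).symm⟩

lemma smul_eq_zero_of_quotient_ofList_equiv {rs : List C} (e : X ≃ₗ[C] C ⧸ Ideal.ofList rs) :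
    ∀ r ∈ rs, ∀ x : X, r • x = 0 := fun r hr x => e.injective <| by
  have hr : Ideal.Quotient.mk (Ideal.ofList rs) r = 0 :=
    Ideal.Quotient.eq_zero_iff_mem.2 (Ideal.subset_span hr)
  rw [map_smul, map_zero, Algebra.smul_def, Ideal.Quotient.algebraMap_eq, hr, zero_mul]

lemma nonempty_ext_length_equiv_self {rs : List C} (reg : IsWeaklyRegular C rs)
    (e : X ≃ₗ[C] C ⧸ Ideal.ofList rs) :
    Nonempty (Ext.{u} X (ModuleCat.of C C) rs.length ≃ₗ[C] X) := by
  obtain ⟨extEquiv⟩ := nonempty_ext_length_equiv (Y := ModuleCat.of C C) reg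
    (smul_eq_zero_of_quotient_ofList_equiv e)
  let quotientEquiv : (C ⧸ (Ideal.ofList rs • ⊤ : Submodule C C)) ≃ₗ[C] C ⧸ Ideal.ofList rs :=
    Submodule.quotEquivOfEq _ _ (Ideal.mul_top _)
  let endEquiv := LinearMap.extendScalarsOfSurjectiveEquiv (M := C ⧸ Ideal.ofList rs)
    (N := C ⧸ Ideal.ofList rs) (Ideal.Quotient.mk_surjective (I := Ideal.ofList rs))
  exact ⟨extEquiv ≪≫ₗ e.arrowCongr quotientEquiv ≪≫ₗ endEquiv ≪≫ₗ
    LinearMap.ringLmapEquivSelf (C ⧸ Ideal.ofList rs) C (C ⧸ Ideal.ofList rs) ≪≫ₗ e.symm⟩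

lemma hasProjectiveDimensionLE_length [IsLocalRing C] [IsNoetherianRing C] {rs : List C}
    (reg : IsRegular C rs) (e : X ≃ₗ[C] C ⧸ Ideal.ofList rs) :
    HasProjectiveDimensionLE X rs.length := by
  let e' := (e ≪≫ₗ (Shrink.linearEquiv.{u} C (C ⧸ Ideal.ofList rs)).symm).toModuleIso
  rw [← projectiveDimension_le_iff, projectiveDimension_eq_of_iso e',
    ModuleCat.projectiveDimension_quotient_eq_length rs reg]

lemma subsingleton_ext_of_ne_length [IsLocalRing C] [IsNoetherianRing C] {rs : List C}
    (reg : IsRegular C rs) (e : X ≃ₗ[C] C ⧸ Ideal.ofList rs) {j : ℕ} (hj : j ≠ rs.length) :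
    Subsingleton (Ext.{u} X (ModuleCat.of C C) j) := by
  rcases hj.lt_or_gt with hj | hj
  · exact subsingleton_ext_of_isWeaklyRegular reg.toIsWeaklyRegular
      (smul_eq_zero_of_quotient_ofList_equiv e) hj
  · have := hasProjectiveDimensionLE_length reg e
    exact HasProjectiveDimensionLT.subsingleton X (rs.length + 1) j hj _

end Rees

section ExtStalk

open Abelian RingTheory.Sequence
open scoped TensorProduct

noncomputable def extendScalarsEquiv {B C : Type u} [CommRing B] [CommRing C] [Algebra B C]
    (M : ModuleCat.{u} B) :
    (ModuleCat.extendScalars (algebraMap B C)).obj M ≃ₗ[C] C ⊗[B] M :=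
  let e : C ⊗[B] M ≃+ (ModuleCat.extendScalars (algebraMap B C)).obj M :=
    (TensorProduct.congr (restrictScalarsSelfEquiv (C := C)) (.refl B M)).symm.toAddEquiv
  .symm <| e.toLinearEquiv fun c x => by
    induction x using TensorProduct.induction_on with
    | zero => rw [smul_zero, map_zero, smul_zero]
    | tmul s m => rfl
    | add x y hx hy => rw [smul_add, map_add, map_add, hx, hy, smul_add]

variable {A B : Type u} [CommRing A] [CommRing B] [Algebra B A] (p : Ideal B) [p.IsPrime]
  (q : Ideal A) [q.IsPrime] [q.LiesOver p]

lemma isLocalizedModule_primeCompl_of_liesOver (hA : Function.Surjective (algebraMap B A))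
    {E W : Type*} [AddCommGroup E] [Module A E] [Module B E] [IsScalarTower B A E]
    [AddCommGroup W] [Module A W] [Module B W] [IsScalarTower B A W] (l : E →ₗ[A] W)
    [IsLocalizedModule p.primeCompl (l.restrictScalars B)] : IsLocalizedModule q.primeCompl l := by
  rw [← Ideal.algebraMapSubmonoid_primeCompl_of_liesOver_surjective q p hA]
  exact .of_restrictScalars p.primeCompl l

lemma isLocalizedModule_toAlgHom_of_liesOver (hA : Function.Surjective (algebraMap B A)) :
    IsLocalizedModule p.primeCompl
      (IsScalarTower.toAlgHom B A (Localization.AtPrime q)).toLinearMap := by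
  rw [isLocalizedModule_iff_isLocalization,
    Ideal.algebraMapSubmonoid_primeCompl_of_liesOver_surjective q p hA]
  infer_instance

lemma isLocalizedModule_tensorProduct_mk_flip {R M : Type*} [CommRing R] [AddCommGroup M]
    [Module R M] (S : Submonoid R) :
    IsLocalizedModule S ((TensorProduct.mk R M (Localization S)).flip 1) :=
  .of_linearEquiv S (TensorProduct.mk R (Localization S) M 1)
    (TensorProduct.comm R (Localization S) M)

lemma nonempty_localizedModule_equiv_of_tensor_equiv (hA : Function.Surjective (algebraMap B A))
    {E W : Type*} [AddCommGroup E] [Module A E] [Module B E] [IsScalarTower B A E]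
    [AddCommGroup W] [Module A W] [Module B W] [IsScalarTower B A W]
    [Module (Localization.AtPrime q) W] [IsScalarTower A (Localization.AtPrime q) W]
    (e : E ⊗[B] Localization.AtPrime p ≃ₗ[B] W) :
    Nonempty (LocalizedModule q.primeCompl E ≃ₗ[Localization.AtPrime q] W) := by
  have := isLocalizedModule_tensorProduct_mk_flip (M := E) p.primeCompl
  let l : E →ₗ[B] W := e ∘ₗ (TensorProduct.mk B E (Localization.AtPrime p)).flip 1
  have : IsLocalizedModule p.primeCompl
      ((LinearMap.extendScalarsOfSurjective hA l).restrictScalars B) :=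
    .of_linearEquiv p.primeCompl _ e
  have := isLocalizedModule_primeCompl_of_liesOver p q hA (LinearMap.extendScalarsOfSurjective hA l)
  exact ⟨(IsLocalizedModule.iso q.primeCompl (LinearMap.extendScalarsOfSurjective hA l)
    ).extendScalarsOfIsLocalization q.primeCompl (Localization.AtPrime q)⟩

lemma nonempty_localization_equiv_quotient
    [Algebra (Localization.AtPrime p) (Localization.AtPrime q)]
    [Localization.AtPrime.IsLiesOverAlgebra p q] (hA : Function.Surjective (algebraMap B A)) :
    Nonempty (Localization.AtPrime q ≃ₗ[Localization.AtPrime p] Localization.AtPrime p ⧸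
      RingHom.ker (algebraMap (Localization.AtPrime p) (Localization.AtPrime q))) := by
  have surjective : Function.Surjective
      (algebraMap (Localization.AtPrime p) (Localization.AtPrime q)) := by
    obtain rfl := q.over_def p
    rw [Localization.AtPrime.IsLiesOverAlgebra.algebraMap_eq]
    exact RingHom.surjective_localRingHom_of_surjective _ hA _
  exact ⟨(Ideal.quotientKerAlgEquivOfSurjective
    (f := Algebra.ofId (Localization.AtPrime p) (Localization.AtPrime q))
    surjective).symm.toLinearEquiv⟩

lemma nonempty_extendScalars_equiv [Algebra (Localization.AtPrime p) (Localization.AtPrime q)]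
    [Localization.AtPrime.IsLiesOverAlgebra p q] (hA : Function.Surjective (algebraMap B A)) :
    Nonempty ((ModuleCat.extendScalars (algebraMap B (Localization.AtPrime p))).obj
      (ModuleCat.of B A) ≃ₗ[Localization.AtPrime p] Localization.AtPrime q) :=
  have := isLocalizedModule_toAlgHom_of_liesOver p q hA
  ⟨extendScalarsEquiv _ ≪≫ₗ (IsLocalizedModule.isBaseChange p.primeCompl (Localization.AtPrime p)
    (IsScalarTower.toAlgHom B A (Localization.AtPrime q)).toLinearMap).equiv⟩

lemma nonempty_extendScalars_equiv_quotient
    [Algebra (Localization.AtPrime p) (Localization.AtPrime q)]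
    [Localization.AtPrime.IsLiesOverAlgebra p q] (hA : Function.Surjective (algebraMap B A)) :
    Nonempty ((ModuleCat.extendScalars (algebraMap B (Localization.AtPrime p))).obj
      (ModuleCat.of B A) ≃ₗ[Localization.AtPrime p] Localization.AtPrime p ⧸
        RingHom.ker (algebraMap (Localization.AtPrime p) (Localization.AtPrime q))) :=
  (nonempty_extendScalars_equiv p q hA).map2 .trans (nonempty_localization_equiv_quotient p q hA)

variable {φ : A →+* B} [IsNoetherianRing B]

lemma nonempty_localizedModule_dualizingModule_equiv (hφ : ∀ a, algebraMap B A (φ a) = a) {j : ℕ}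
    {W : Type*} [AddCommGroup W] [Module B W] [Module A W] [IsScalarTower B A W]
    [Module (Localization.AtPrime p) W] [IsScalarTower B (Localization.AtPrime p) W]
    [Module (Localization.AtPrime q) W] [IsScalarTower A (Localization.AtPrime q) W]
    (e : Ext.{u} ((ModuleCat.extendScalars (algebraMap B (Localization.AtPrime p))).obj
        (ModuleCat.of B A)) (ModuleCat.of _ (Localization.AtPrime p)) j
      ≃ₗ[Localization.AtPrime p] W) :
    Nonempty (LocalizedModule q.primeCompl (dualizingModule φ j) ≃ₗ[Localization.AtPrime q] W) := by
  have hA : Function.Surjective (algebraMap B A) := fun a => ⟨φ a, hφ a⟩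
  have : Module.Finite B A := .of_surjective (Algebra.linearMap B A) hA
  let : Module B (dualizingModule φ j) :=
    ((extFunctor B (ModuleCat.of B A) j).obj (ModuleCat.of B B)).isModule
  have : IsScalarTower B A (dualizingModule φ j) :=
    isScalarTower_restrictScalars (smul_ext_eq_section_smul hφ)
  exact nonempty_localizedModule_equiv_of_tensor_equiv p q hA (E := dualizingModule φ j)
    (extTensorEquiv (ModuleCat.of B A) j e)

section

variable [Algebra (Localization.AtPrime p) (Localization.AtPrime q)]
  [Localization.AtPrime.IsLiesOverAlgebra p q] {rs : List (Localization.AtPrime p)}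
  (reg : IsRegular (Localization.AtPrime p) rs)
  (ker_eq : RingHom.ker (algebraMap (Localization.AtPrime p) (Localization.AtPrime q)) =
    Ideal.ofList rs)
include reg ker_eq

lemma nonempty_localizedModule_dualizingModule_length_equiv (hφ : ∀ a, algebraMap B A (φ a) = a) :
    Nonempty (LocalizedModule q.primeCompl (dualizingModule φ rs.length) ≃ₗ[Localization.AtPrime q]
      Localization.AtPrime q) := by
  have hA : Function.Surjective (algebraMap B A) := fun a => ⟨φ a, hφ a⟩
  obtain ⟨stalkEquiv⟩ := nonempty_extendScalars_equiv p q hA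
  obtain ⟨quotientEquiv⟩ := ker_eq ▸ nonempty_extendScalars_equiv_quotient p q hA
  obtain ⟨extEquiv⟩ := nonempty_ext_length_equiv_self reg.toIsWeaklyRegular quotientEquiv
  exact nonempty_localizedModule_dualizingModule_equiv p q hφ (extEquiv ≪≫ₗ stalkEquiv)

lemma subsingleton_localizedModule_dualizingModule (hφ : ∀ a, algebraMap B A (φ a) = a) {j : ℕ}
    (hj : j ≠ rs.length) : Subsingleton (LocalizedModule q.primeCompl (dualizingModule φ j)) := by
  have hA : Function.Surjective (algebraMap B A) := fun a => ⟨φ a, hφ a⟩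
  obtain ⟨quotientEquiv⟩ := ker_eq ▸ nonempty_extendScalars_equiv_quotient p q hA
  have := subsingleton_ext_of_ne_length reg quotientEquiv hj
  obtain ⟨e⟩ := nonempty_localizedModule_dualizingModule_equiv p q hφ
    (W := PUnit.{u + 1}) (j := j) 0
  exact e.subsingleton

lemma hasProjectiveDimensionLE_localizedModule (hA : Function.Surjective (algebraMap B A)) :
    HasProjectiveDimensionLE ((ModuleCat.of B A).localizedModule p.primeCompl) rs.length := by
  obtain ⟨quotientEquiv⟩ := ker_eq ▸ nonempty_extendScalars_equiv_quotient p q hA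
  have := (ModuleCat.of B A).localizedModule_isLocalizedModule p.primeCompl
  let localizedModuleEquiv := (IsLocalizedModule.isBaseChange p.primeCompl
    (Localization.AtPrime p) ((ModuleCat.of B A).localizedModuleMkLinearMap p.primeCompl)).equiv
  exact hasProjectiveDimensionLE_length reg
    (localizedModuleEquiv.symm ≪≫ₗ (extendScalarsEquiv _).symm ≪≫ₗ quotientEquiv)

end

end ExtStalk

section Invertible

open scoped TensorProduct

variable {R M N : Type*} [CommRing R] [AddCommGroup M] [Module R M] [AddCommGroup N] [Module R N]

lemma rankAtStalk_linearMap [Module.FinitePresentation R M] [Module.Flat R M]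
    [Module.Finite R N] [Module.Flat R N] :
    Module.rankAtStalk (M →ₗ[R] N) = Module.rankAtStalk M * Module.rankAtStalk (R := R) N := by
  ext p
  let C := Localization.AtPrime p.asIdeal
  have : Module.Free C (C ⊗[R] M) := Module.free_of_flat_of_isLocalRing
  have : Module.Free C (C ⊗[R] N) := Module.free_of_flat_of_isLocalRing
  have := Module.FinitePresentation.isBaseChange_map R M N C
  simp only [Pi.mul_apply, Module.rankAtStalk_eq_finrank_tensorProduct]
  rw [this.equiv.finrank_eq, Module.finrank_linearMap]

lemma contractLeft_surjective_of_support_eq_univ [Module.Finite R M] [Module.Projective R M]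
    (hM : Module.support R M = Set.univ) : Function.Surjective (contractLeft R M) := by
  by_contra not_surjective
  obtain ⟨m, hm, range_le⟩ := Ideal.exists_le_maximal (LinearMap.range (contractLeft R M))
    (mt LinearMap.range_eq_top.mp not_surjective)
  have : Nontrivial (m.ResidueField ⊗[R] M) :=
    (Module.mem_support_iff_nontrivial_residueField_tensorProduct ⟨m, hm.isPrime⟩).mp
      (hM ▸ Set.mem_univ _)
  obtain ⟨g, g_ne_zero⟩ := exists_ne (0 : Module.Dual m.ResidueField (m.ResidueField ⊗[R] M))
  obtain ⟨f, hf⟩ := Module.projective_lifting_property (Algebra.linearMap R m.ResidueField)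
    (g.restrictScalars R ∘ₗ TensorProduct.mk R _ M 1) m.algebraMap_residueField_surjective
  refine g_ne_zero (TensorProduct.AlgebraTensorModule.curry_injective (LinearMap.ext_ring ?_))
  ext x
  have : algebraMap R m.ResidueField (f x) = 0 := Ideal.algebraMap_residueField_eq_zero.mpr <|
    range_le ⟨f ⊗ₜ x, contractLeft_apply f x⟩
  exact (LinearMap.congr_fun hf x).symm.trans this

lemma invertible_of_rankAtStalk_eq_one [Module.Finite R M] [Module.Projective R M]
    (hM : Module.rankAtStalk (R := R) M = 1) : Module.Invertible R M where
  bijective := by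
    have support : Module.support R M = Set.univ := Set.eq_univ_of_forall fun p =>
      (Module.rankAtStalk_pos_iff_mem_support p).mp (by simp [hM])
    refine Module.bijective_of_surjective_of_rankAtStalk_eq (M := Module.Dual R M ⊗[R] M) (N := R)
      (φ := contractLeft R M)
      (contractLeft_surjective_of_support_eq_univ support) fun m _ => ?_
    have := Module.finitePresentation_of_projective R M
    rw [Module.rankAtStalk_tensorProduct, rankAtStalk_linearMap, hM, one_mul, mul_one]

lemma isInvertible_of_invertible {R L : Type u} [CommRing R] [AddCommGroup L] [Module R L]
    [Module.Invertible R L] : Module.IsInvertible R L :=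
  ⟨Module.Dual R L, inferInstance, inferInstance,
    ⟨TensorProduct.comm R L (Module.Dual R L) ≪≫ₗ Module.Invertible.linearEquiv R L⟩⟩

end Invertible

section Codimension

variable {A B : Type u} [CommRing A] [CommRing B] [Algebra B A] {φ : A →+* B}

variable (φ) in
/-- The closed immersion `Spec A → Spec B` has codimension `n` at the prime `q`. For a regular
immersion this is the length of a regular sequence generating the kernel of `B_p → A_q`; recorded
are the consequences for the modules `Ext_B^j(A, B)` and for the projective dimension of `A`. -/
structure HasCodimensionAt (q : Ideal A) [q.IsPrime] (n : ℕ) : Prop where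
  nonempty_equiv : Nonempty (LocalizedModule q.primeCompl (dualizingModule φ n)
    ≃ₗ[Localization.AtPrime q] Localization.AtPrime q)
  subsingleton {j : ℕ} (hj : j ≠ n) :
    Subsingleton (LocalizedModule q.primeCompl (dualizingModule φ j))
  hasProjectiveDimensionLE : HasProjectiveDimensionLE
    ((ModuleCat.of B A).localizedModule (q.under B).primeCompl) n

lemma HasCodimensionAt.flat {q : Ideal A} [q.IsPrime] {n : ℕ} (h : HasCodimensionAt φ q n) (j : ℕ) :
    Module.Flat (Localization.AtPrime q) (LocalizedModule q.primeCompl (dualizingModule φ j)) := by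
  obtain rfl | hj := eq_or_ne j n
  · obtain ⟨e⟩ := h.nonempty_equiv
    exact .of_linearEquiv e
  · have := h.subsingleton hj
    exact .of_free

lemma HasCodimensionAt.rankAtStalk_eq_one {q : PrimeSpectrum A} {n : ℕ}
    (h : HasCodimensionAt φ q.asIdeal n) : Module.rankAtStalk (dualizingModule φ n) q = 1 := by
  obtain ⟨e⟩ := h.nonempty_equiv
  rw [Module.rankAtStalk, e.finrank_eq, Module.finrank_self]

lemma HasCodimensionAt.eq_of_rankAtStalk_ne_zero {q : PrimeSpectrum A} {n j : ℕ}
    (h : HasCodimensionAt φ q.asIdeal n) (hj : Module.rankAtStalk (dualizingModule φ j) q ≠ 0) :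
    j = n := by
  by_contra hjn
  have := h.subsingleton hjn
  exact hj Module.finrank_zero_of_subsingleton

lemma subsingleton_dualizingModule {n : ℕ}
    (hn : ∀ q : PrimeSpectrum A, HasCodimensionAt φ q.asIdeal n) {j : ℕ} (hj : j ≠ n) :
    Subsingleton (dualizingModule φ j) := by
  rw [← Module.support_eq_empty_iff (R := A), Set.eq_empty_iff_forall_notMem]
  exact fun q => Module.notMem_support_iff.mpr ((hn q).subsingleton hj)

variable [IsNoetherianRing B] (hφ : ∀ a, algebraMap B A (φ a) = a)
include hφ

lemma exists_hasCodimensionAt (hlci : (algebraMap B A).IsLocalCompleteIntersection)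
    (q : Ideal A) [q.IsPrime] :
    ∃ n, HasCodimensionAt φ q n := by
  obtain ⟨rs, reg, ker⟩ := hlci q inferInstance
  let := Localization.AtPrime.algebraOfLiesOver (q.under B) q
  exact ⟨rs.length, nonempty_localizedModule_dualizingModule_length_equiv (q.under B) q reg ker hφ,
    subsingleton_localizedModule_dualizingModule (q.under B) q reg ker hφ,
    hasProjectiveDimensionLE_localizedModule (q.under B) q reg ker fun a => ⟨φ a, hφ a⟩⟩

lemma finite_dualizingModule (j : ℕ) :
    Module.Finite A (dualizingModule φ j) := by
  have : Module.Finite B A := .of_surjective (Algebra.linearMap B A) fun a => ⟨φ a, hφ a⟩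
  let : Module B (dualizingModule φ j) :=
    ((extFunctor B (ModuleCat.of B A) j).obj (ModuleCat.of B B)).isModule
  have : IsScalarTower B A (dualizingModule φ j) :=
    isScalarTower_restrictScalars (smul_ext_eq_section_smul hφ)
  have : Module.Finite B (dualizingModule φ j) :=
    inferInstanceAs (Module.Finite B (Abelian.Ext.{u} (ModuleCat.of B A) (ModuleCat.of B B) j))
  exact .of_restrictScalars_finite B A _

lemma flat_dualizingModule (hlci : (algebraMap B A).IsLocalCompleteIntersection) (j : ℕ) :
    Module.Flat A (dualizingModule φ j) :=
  Module.flat_of_localized_maximal _ fun m _ => by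
    obtain ⟨n, hn⟩ := exists_hasCodimensionAt hφ hlci m
    have := hn.flat j
    exact .trans A (Localization.AtPrime m) _

lemma projective_dualizingModule (hlci : (algebraMap B A).IsLocalCompleteIntersection) (j : ℕ) :
    Module.Projective A (dualizingModule φ j) := by
  have := isNoetherianRing_of_surjective B A (algebraMap B A) fun a => ⟨φ a, hφ a⟩
  have := finite_dualizingModule hφ j
  have := Module.finitePresentation_of_finite A (dualizingModule φ j)
  have := flat_dualizingModule hφ hlci j
  exact Module.Flat.projective_of_finitePresentation

lemma exists_forall_hasCodimensionAt [ConnectedSpace (PrimeSpectrum A)]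
    (hlci : (algebraMap B A).IsLocalCompleteIntersection) :
    ∃ n, ∀ q : PrimeSpectrum A, HasCodimensionAt φ q.asIdeal n := by
  let q₀ : PrimeSpectrum A := Classical.arbitrary _
  obtain ⟨n, hn⟩ := exists_hasCodimensionAt hφ hlci q₀.asIdeal
  refine ⟨n, fun q => ?_⟩
  obtain ⟨m, hm⟩ := exists_hasCodimensionAt hφ hlci q.asIdeal
  have := finite_dualizingModule hφ n
  have := projective_dualizingModule hφ hlci n
  have := Module.finitePresentation_of_projective A (dualizingModule φ n)
  have rank_eq_one := (Module.isLocallyConstant_rankAtStalk.apply_eq_of_isPreconnected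
    isPreconnected_univ (Set.mem_univ q) (Set.mem_univ q₀)).trans hn.rankAtStalk_eq_one
  rwa [hm.eq_of_rankAtStalk_ne_zero (rank_eq_one.trans_ne one_ne_zero)]

lemma hasProjectiveDimensionLE_of_forall_hasCodimensionAt {n : ℕ}
    (hn : ∀ q : PrimeSpectrum A, HasCodimensionAt φ q.asIdeal n) :
    HasProjectiveDimensionLE (ModuleCat.of B A) n := by
  have hA : Function.Surjective (algebraMap B A) := fun a => ⟨φ a, hφ a⟩
  have : Module.Finite B A := .of_surjective (Algebra.linearMap B A) hA
  rw [ModuleCat.hasProjectiveDimensionLE_iff_forall_primeSpectrum]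
  intro p
  rcases subsingleton_or_nontrivial (LocalizedModule p.asIdeal.primeCompl A) with _ | nontrivial
  · have : Subsingleton ((ModuleCat.of B A).localizedModule p.asIdeal.primeCompl) :=
      (equivShrink (LocalizedModule p.asIdeal.primeCompl A)).symm.subsingleton
    have := (ModuleCat.isZero_of_subsingleton
      ((ModuleCat.of B A).localizedModule p.asIdeal.primeCompl)).hasProjectiveDimensionLT_zero
    exact hasProjectiveDimensionLT_of_ge _ 0 (n + 1) (Nat.zero_le _)
  · obtain ⟨q, rfl⟩ : p ∈ Set.range (PrimeSpectrum.comap (algebraMap B A)) := by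
      rwa [range_comap_of_surjective _ _ hA, ← Module.support_of_algebra]
    exact (hn q).hasProjectiveDimensionLE

lemma invertible_dualizingModule (hlci : (algebraMap B A).IsLocalCompleteIntersection) {n : ℕ}
    (hn : ∀ q : PrimeSpectrum A, HasCodimensionAt φ q.asIdeal n) :
    Module.Invertible A (dualizingModule φ n) :=
  have := finite_dualizingModule hφ n
  have := projective_dualizingModule hφ hlci n
  invertible_of_rankAtStalk_eq_one (funext fun q => (hn q).rankAtStalk_eq_one)

end Codimension

section RetractFunctors

variable {A B : Type u} [CommRing A] [CommRing B] (φ : A →+* B) (ψ : B →+* A)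

lemma isZero_const_punit :
    IsZero ((Functor.const (ModuleCat.{u} B)).obj (ModuleCat.of A PUnit.{u + 1})) :=
  Functor.isZero _ fun _ => ModuleCat.isZero_of_subsingleton (ModuleCat.of A PUnit)

lemma isZero_extRetractFunctor_of_neg {i : ℤ} (hi : i < 0) : IsZero (extRetractFunctor φ ψ i) := by
  rw [extRetractFunctor, if_neg hi.not_ge]
  exact isZero_const_punit

lemma isZero_torRetractFunctor_of_neg {i : ℤ} (hi : i < 0) : IsZero (torRetractFunctor φ ψ i) := by
  rw [torRetractFunctor, if_neg hi.not_ge]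
  exact isZero_const_punit

lemma extRetractFunctor_natCast (j : ℕ) :
    letI := ψ.toModule
    extRetractFunctor φ ψ j = (Ext B (ModuleCat.{u} B) j).obj (Opposite.op (ModuleCat.of B A)) ⋙
      ModuleCat.restrictScalars φ := by
  rw [extRetractFunctor, if_pos j.cast_nonneg, Int.toNat_natCast]

lemma torRetractFunctor_natCast (j : ℕ) :
    letI := ψ.toModule
    torRetractFunctor φ ψ j =
      (Tor (ModuleCat.{u} B) j).obj (ModuleCat.of B A) ⋙ ModuleCat.restrictScalars φ := by
  rw [torRetractFunctor, if_pos j.cast_nonneg, Int.toNat_natCast]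

end RetractFunctors

end VanDenBergh

open VanDenBergh in
theorem vdb_duality_retraction_ext_tor_general
    {A B : Type u} [CommRing A] [CommRing B] [IsNoetherianRing B]
    (φ : A →+* B) (ψ : B →+* A) (hretract : ψ.comp φ = RingHom.id A)
    (hlci : ψ.IsLocalCompleteIntersection) (hconn : ConnectedSpace (PrimeSpectrum A)) :
    ∃ (n : ℕ) (N : Type u) (_ : AddCommGroup N) (_ : Module A N),
      Module.IsInvertible A N ∧
      ∀ i : ℤ, Nonempty
        (extRetractFunctor φ ψ i ≅
          torRetractFunctor φ ψ ((n : ℤ) - i) ⋙ tensorLeft (ModuleCat.of A N)) := by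
  let : Algebra B A := ψ.toAlgebra
  have hφ (a : A) : algebraMap B A (φ a) = a := RingHom.congr_fun hretract a
  have : Module.Finite B A := .of_surjective (Algebra.linearMap B A) fun a => ⟨φ a, hφ a⟩
  obtain ⟨n, hn⟩ := exists_forall_hasCodimensionAt hφ hlci
  have := hasProjectiveDimensionLE_of_forall_hasCodimensionAt hφ hn
  have := invertible_dualizingModule hφ hlci hn
  have ext_vanishes (j : ℕ) (hj : j < n) :
      Subsingleton (Abelian.Ext.{u} (ModuleCat.of B A) (ModuleCat.of B B) j) :=
    subsingleton_dualizingModule hn hj.ne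
  refine ⟨n, dualizingModule φ n, inferInstance, inferInstance, isInvertible_of_invertible,
    fun i => ?_⟩
  rcases lt_or_ge i 0 with hi | hi
  · obtain ⟨k, hk⟩ := Int.eq_ofNat_of_zero_le (show 0 ≤ n - i by omega)
    rw [hk, torRetractFunctor_natCast]
    exact ⟨(isZero_extRetractFunctor_of_neg φ ψ hi).iso
      (isZero_tensorTor hφ ext_vanishes (by omega))⟩
  lift i to ℕ using hi
  rw [extRetractFunctor_natCast]
  let e := Functor.isoWhiskerRight (extIsoExtFunctor (ModuleCat.of B A) i)
    (ModuleCat.restrictScalars φ)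
  rcases le_or_gt i n with hin | hin
  · rw [← Nat.cast_sub hin, torRetractFunctor_natCast]
    exact ⟨e ≪≫ (tensorTorIsoExt hφ ext_vanishes (n - i) (Nat.sub_add_cancel hin)).symm⟩
  · exact ⟨((isZero_comp (isZero_extFunctor _ hin) _).of_iso e).iso
      (isZero_comp (isZero_torRetractFunctor_of_neg φ ψ (by omega)) _)⟩

/-- **Van den Bergh duality for ring retractions, part 2.**
Let `φ : A →+* B`, `ψ : B →+* A` be homomorphisms of commutative noetherian rings with
`ψ ∘ φ = id` (a ring retraction).  Assume `B` is flat as an `A`-module via `φ`, the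
surjection `ψ` is a local complete intersection, `A` is a perfect `B`-module via `ψ`, and
`A` is nonzero with connected spectrum.  Then there are `n : ℕ` and an invertible
`A`-module `N̄` such that for every `B`-module `X` and every integer `i` there is an
isomorphism of `A`-modules `Ext^i_B(A, X) ≅ N̄ ⊗[A] Tor^B_{n-i}(A, X)`, natural in `X`
(with `Ext` and `Tor` in negative degrees interpreted as zero). -/
theorem vdb_duality_retraction_ext_tor
    {A B : Type u} [CommRing A] [CommRing B]
    [IsNoetherianRing A] [IsNoetherianRing B]
    (φ : A →+* B) (ψ : B →+* A) (hretract : ψ.comp φ = RingHom.id A)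
    (hflat : letI := φ.toModule; Module.Flat A B)
    (hsurj : Function.Surjective ψ)
    (hlci : ψ.IsLocalCompleteIntersection)
    (hperf : letI := ψ.toModule; Module.IsPerfect B A)
    (hnt : Nontrivial A)
    (hconn : ConnectedSpace (PrimeSpectrum A)) :
    ∃ (n : ℕ) (N : Type u) (_ : AddCommGroup N) (_ : Module A N),
      Module.IsInvertible A N ∧
      ∀ i : ℤ, Nonempty
        (extRetractFunctor φ ψ i ≅
          torRetractFunctor φ ψ ((n : ℤ) - i) ⋙ tensorLeft (ModuleCat.of A N)) :=
  vdb_duality_retraction_ext_tor_general φ ψ hretract hlci hconn
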